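/- Let Z=(X,Y) ∈ Ω₁ be such that λ₁⁺, λ₂⁺, λ₁⁻, λ₂⁻ are all real with λ₁⁺λ₂⁺ < 0 and λ₁⁻λ₂⁻ < 0 (so Z ∈ Ω_ss). Then Z is locally Σ-equivalent near the origin to Z_ss = (X_ss, Y_ss), where X_ss(x,y) = (y, x) and Y_ss(x,y) = (y, x). -/

import Mathlib

open Set Filter

noncomputable section

/-- Entry (1,1) of the Jacobian matrix of `X` at the origin. -/
noncomputable def jac11 (X : ℝ × ℝ → ℝ × ℝ) : ℝ := (fderiv ℝ X (0, 0) (1, 0)).1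
/-- Entry (1,2) of the Jacobian matrix of `X` at the origin. -/
noncomputable def jac12 (X : ℝ × ℝ → ℝ × ℝ) : ℝ := (fderiv ℝ X (0, 0) (0, 1)).1
/-- Entry (2,1) of the Jacobian matrix of `X` at the origin, i.e. `∂ₓX₂(0,0)`. -/
noncomputable def jac21 (X : ℝ × ℝ → ℝ × ℝ) : ℝ := (fderiv ℝ X (0, 0) (1, 0)).2
/-- Entry (2,2) of the Jacobian matrix of `X` at the origin. -/
noncomputable def jac22 (X : ℝ × ℝ → ℝ × ℝ) : ℝ := (fderiv ℝ X (0, 0) (0, 1)).2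

/-- Determinant of the Jacobian matrix of `X` at the origin. -/
noncomputable def detJ (X : ℝ × ℝ → ℝ × ℝ) : ℝ := jac11 X * jac22 X - jac12 X * jac21 X
/-- Trace of the Jacobian matrix of `X` at the origin. -/
noncomputable def trJ (X : ℝ × ℝ → ℝ × ℝ) : ℝ := jac11 X + jac22 X

/-- The first (complex) eigenvalue of the Jacobian matrix of `X` at the origin. -/
noncomputable def eig1 (X : ℝ × ℝ → ℝ × ℝ) : ℂ :=
  if 0 ≤ trJ X ^ 2 - 4 * detJ X then
    (((trJ X + Real.sqrt (trJ X ^ 2 - 4 * detJ X)) / 2 : ℝ) : ℂ)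
  else
    (((trJ X / 2 : ℝ) : ℂ) + (Real.sqrt (4 * detJ X - trJ X ^ 2) / 2 : ℝ) * Complex.I)

/-- The second (complex) eigenvalue of the Jacobian matrix of `X` at the origin. -/
noncomputable def eig2 (X : ℝ × ℝ → ℝ × ℝ) : ℂ :=
  if 0 ≤ trJ X ^ 2 - 4 * detJ X then
    (((trJ X - Real.sqrt (trJ X ^ 2 - 4 * detJ X)) / 2 : ℝ) : ℂ)
  else
    (((trJ X / 2 : ℝ) : ℂ) - (Real.sqrt (4 * detJ X - trJ X ^ 2) / 2 : ℝ) * Complex.I)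

/-- The quantity ℓ : `Re λ₁⁺/|Im λ₁⁺| + Re λ₁⁻/|Im λ₁⁻|` when both imaginary parts are
nonzero, and `1` otherwise. -/
noncomputable def ellVal (X Y : ℝ × ℝ → ℝ × ℝ) : ℝ :=
  if (eig1 X).im * (eig1 Y).im ≠ 0 then
    (eig1 X).re / |(eig1 X).im| + (eig1 Y).re / |(eig1 Y).im|
  else 1

/-- Membership in Ω₀ : `Z = (X, Y)` is a piecewise `C¹` vector field on the open set `U`
containing the origin, the origin is a zero of both `X` and `Y`, it is non-degenerate for
both, and `∂ₓX₂(0,0) ⬝ ∂ₓY₂(0,0) > 0`. -/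
def InOmega0 (U : Set (ℝ × ℝ)) (X Y : ℝ × ℝ → ℝ × ℝ) : Prop :=
  IsOpen U ∧ (0, 0) ∈ U ∧ ContDiffOn ℝ 1 X U ∧ ContDiffOn ℝ 1 Y U ∧
    X (0, 0) = (0, 0) ∧ Y (0, 0) = (0, 0) ∧ detJ X * detJ Y ≠ 0 ∧ jac21 X * jac21 Y > 0

/-- Membership in Ω₁ : member of Ω₀ with distinct eigenvalues of each Jacobian matrix
and `ℓ ≠ 0`. -/
def InOmega1 (U : Set (ℝ × ℝ)) (X Y : ℝ × ℝ → ℝ × ℝ) : Prop :=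
  InOmega0 U X Y ∧ eig1 X ≠ eig2 X ∧ eig1 Y ≠ eig2 Y ∧ ellVal X Y ≠ 0

/-- `γ` is a solution of `ẋ = X(x)` on the time set `I`. -/
def IsSolutionOn (X : ℝ × ℝ → ℝ × ℝ) (γ : ℝ → ℝ × ℝ) (I : Set ℝ) : Prop :=
  ∀ t ∈ I, HasDerivAt γ (X (γ t)) t

/-- `H` maps orbit arcs of `X` lying in `S` onto orbit arcs of `X'` lying in `S'`,
preserving the direction of time (via an increasing homeomorphism of time intervals). -/
def MapsOrbits (X X' : ℝ × ℝ → ℝ × ℝ) (H : ℝ × ℝ → ℝ × ℝ) (S S' : Set (ℝ × ℝ)) : Prop :=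
  ∀ (γ : ℝ → ℝ × ℝ) (I : Set ℝ), I.OrdConnected → IsSolutionOn X γ I →
    (∀ t ∈ I, γ t ∈ S) →
    ∃ (δ : ℝ → ℝ × ℝ) (J : Set ℝ) (τ : ℝ → ℝ),
      J.OrdConnected ∧ IsSolutionOn X' δ J ∧ (∀ s ∈ J, δ s ∈ S') ∧
      Set.BijOn τ I J ∧ StrictMonoOn τ I ∧ ContinuousOn τ I ∧
      ∀ t ∈ I, H (γ t) = δ (τ t)

/-- Local Σ-equivalence near the origin between the piecewise smooth vector fields
`Z = (X, Y)` and `Z' = (X', Y')`: a homeomorphism `H` between neighborhoods of the origin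
fixing the origin, preserving the switching line `{y = 0}`, and mapping orbit arcs of `X`
(resp. `Y`) in `{y ≥ 0}` (resp. `{y ≤ 0}`) onto orbit arcs of `X'` (resp. `Y'`),
preserving the direction of time, and conversely. -/
def LocalSigmaEquiv (X Y X' Y' : ℝ × ℝ → ℝ × ℝ) : Prop :=
  ∃ (U₀ V₀ : Set (ℝ × ℝ)) (H Hinv : ℝ × ℝ → ℝ × ℝ),
    U₀ ∈ nhds ((0, 0) : ℝ × ℝ) ∧ V₀ ∈ nhds ((0, 0) : ℝ × ℝ) ∧
    ContinuousOn H U₀ ∧ ContinuousOn Hinv V₀ ∧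
    Set.BijOn H U₀ V₀ ∧
    (∀ p ∈ U₀, Hinv (H p) = p) ∧ (∀ q ∈ V₀, H (Hinv q) = q) ∧
    H (0, 0) = (0, 0) ∧
    H '' (U₀ ∩ {p : ℝ × ℝ | p.2 = 0}) = V₀ ∩ {p : ℝ × ℝ | p.2 = 0} ∧
    MapsOrbits X X' H (U₀ ∩ {p : ℝ × ℝ | 0 ≤ p.2}) (V₀ ∩ {p : ℝ × ℝ | 0 ≤ p.2}) ∧
    MapsOrbits Y Y' H (U₀ ∩ {p : ℝ × ℝ | p.2 ≤ 0}) (V₀ ∩ {p : ℝ × ℝ | p.2 ≤ 0}) ∧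
    MapsOrbits X' X Hinv (V₀ ∩ {p : ℝ × ℝ | 0 ≤ p.2}) (U₀ ∩ {p : ℝ × ℝ | 0 ≤ p.2}) ∧
    MapsOrbits Y' Y Hinv (V₀ ∩ {p : ℝ × ℝ | p.2 ≤ 0}) (U₀ ∩ {p : ℝ × ℝ | p.2 ≤ 0})

section
open scoped NNReal Topology

/-- Hypotheses on the scalar non-autonomous equation `z' = K τ z` on a strip. -/
structure StripODE (K : ℝ → ℝ → ℝ) (M L : ℝ≥0) : Prop where
  cont : ∀ z, Continuous (fun τ => K τ z)
  lip : ∀ τ, LipschitzWith L (K τ)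
  bdd : ∀ τ z, |K τ z| ≤ M
  top : ∀ τ z, 1 ≤ z → K τ z ≤ -1
  bot : ∀ τ z, z ≤ -1 → 1 ≤ K τ z
  dec : ∀ τ z z', -1 ≤ z → z ≤ z' → z' ≤ 1 → K τ z' - K τ z ≤ -(z' - z) / 2

/-- Global solutions of the scalar equation. -/
def StripSol (K : ℝ → ℝ → ℝ) (ζ : ℝ → ℝ) : Prop := ∀ τ, HasDerivAt ζ (K τ (ζ τ)) τ

namespace StripODE

variable {K : ℝ → ℝ → ℝ} {M L : ℝ≥0}

theorem exists_local (h : StripODE K M L) (a z : ℝ) (n : ℕ) :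
    ∃ α : ℝ → ℝ, α a = z ∧
      ∀ t ∈ Ioo (a - (n + 1)) (a + (n + 1)), HasDerivAt α (K t (α t)) t := by
  have hn : (0 : ℝ) ≤ (n : ℝ) + 1 := by positivity
  have ha : a ∈ Icc (a - ((n : ℝ) + 1)) (a + (n + 1)) := ⟨by linarith, by linarith⟩
  have hpl : IsPicardLindelof K (tmin := a - ((n : ℝ) + 1)) (tmax := a + (n + 1)) ⟨a, ha⟩ z
      (M * ((n : ℝ≥0) + 1)) 0 M L := by
    refine ⟨fun t _ => (h.lip t).lipschitzOnWith, fun x _ => (h.cont x).continuousOn,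
      fun t _ x _ => h.bdd t x, ?_⟩
    simp
  obtain ⟨α, h1, h2⟩ := hpl.exists_eq_forall_mem_Icc_hasDerivWithinAt₀
  exact ⟨α, h1, fun t ht => (h2 t (Ioo_subset_Icc_self ht)).hasDerivAt (Icc_mem_nhds ht.1 ht.2)⟩

theorem exists_sol (h : StripODE K M L) (a z : ℝ) : ∃ ζ, ζ a = z ∧ StripSol K ζ := by
  choose α h1 h2 using h.exists_local a z
  have key : ∀ n m : ℕ, n ≤ m → ∀ t ∈ Ioo (a - ((n : ℝ) + 1)) (a + (n + 1)), α n t = α m t := by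
    intro n m hnm t ht
    have hnm' : (n : ℝ) ≤ m := by exact_mod_cast hnm
    have hn : (0 : ℝ) ≤ (n : ℝ) := by positivity
    refine ODE_solution_unique_of_mem_Ioo (v := K) (s := fun _ => univ) (K := L) (t₀ := a)
      (fun t _ => (h.lip t).lipschitzOnWith) ⟨by linarith, by linarith⟩
      (fun t ht => ⟨h2 n t ht, trivial⟩)
      (fun t ht => ⟨h2 m t ⟨by linarith [ht.1], by linarith [ht.2]⟩, trivial⟩)
      ((h1 n).trans (h1 m).symm) ht
  have key2 : ∀ n m : ℕ, ∀ t, |t - a| < n + 1 → |t - a| < m + 1 → α n t = α m t := by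
    intro n m t hn hm
    rw [abs_lt] at hn hm
    rcases le_total n m with hnm | hnm
    · exact key n m hnm t ⟨by linarith, by linarith⟩
    · exact (key m n hnm t ⟨by linarith, by linarith⟩).symm
  have hc : ∀ t : ℝ, |t - a| < (⌈|t - a|⌉₊ : ℝ) + 1 := fun t =>
    lt_of_le_of_lt (Nat.le_ceil _) (lt_add_one _)
  refine ⟨fun t => α ⌈|t - a|⌉₊ t, h1 _, fun t => ?_⟩
  have hd := h2 ⌈|t - a|⌉₊ t (by have := abs_lt.1 (hc t); constructor <;> linarith)
  refine hd.congr_of_eventuallyEq ?_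
  have : ∀ᶠ s in 𝓝 t, |s - a| < (⌈|t - a|⌉₊ : ℝ) + 1 :=
    (by fun_prop : Continuous fun s : ℝ => |s - a|).continuousAt.eventually_lt
      continuousAt_const (hc t)
  filter_upwards [this] with s hs
  exact key2 _ _ s (hc s) hs

theorem unique (h : StripODE K M L) {ζ ξ : ℝ → ℝ} (h1 : StripSol K ζ) (h2 : StripSol K ξ)
    {a : ℝ} (ha : ζ a = ξ a) : ζ = ξ :=
  ODE_solution_unique_univ (v := K) (s := fun _ => univ) (K := L)
    (fun t => (h.lip t).lipschitzOnWith) (fun t => ⟨h1 t, trivial⟩) (fun t => ⟨h2 t, trivial⟩) ha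

theorem _root_.StripSol.continuous {ζ : ℝ → ℝ} (h : StripSol K ζ) : Continuous ζ :=
  continuous_iff_continuousAt.2 fun t => (h t).continuousAt

theorem order (h : StripODE K M L) {ζ ξ : ℝ → ℝ} (h1 : StripSol K ζ) (h2 : StripSol K ξ)
    {a : ℝ} (ha : ζ a < ξ a) (t : ℝ) : ζ t < ξ t := by
  by_contra hcon
  push Not at hcon
  have hc : Continuous fun t => ζ t - ξ t := h1.continuous.sub h2.continuous
  obtain ⟨c, -, hc0⟩ := intermediate_value_univ₂ (f := fun t => ζ t) (g := fun t => ξ t)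
    h1.continuous h2.continuous ha.le hcon |>.imp fun x hx => (⟨trivial, hx⟩ : True ∧ _)
  rw [h.unique h1 h2 hc0] at ha
  exact lt_irrefl _ ha

theorem order_le (h : StripODE K M L) {ζ ξ : ℝ → ℝ} (h1 : StripSol K ζ) (h2 : StripSol K ξ)
    {a : ℝ} (ha : ζ a ≤ ξ a) (t : ℝ) : ζ t ≤ ξ t := by
  rcases ha.lt_or_eq with ha | ha
  · exact (h.order h1 h2 ha t).le
  · rw [h.unique h1 h2 ha]

theorem neg (h : StripODE K M L) : StripODE (fun τ z => -K τ (-z)) M L where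
  cont z := (h.cont (-z)).neg
  lip τ := by
    refine LipschitzWith.of_dist_le_mul fun x y => ?_
    have := (h.lip τ).dist_le_mul (-x) (-y)
    rw [dist_neg_neg] at this
    rwa [dist_neg_neg]
  bdd τ z := by simpa using h.bdd τ (-z)
  top τ z hz := by have := h.bot τ (-z) (by linarith); linarith
  bot τ z hz := by have := h.top τ (-z) (by linarith); linarith
  dec τ z z' h1 h2 h3 := by
    have := h.dec τ (-z') (-z) (by linarith) (by linarith) (by linarith)
    linarith

theorem _root_.StripSol.neg {ζ : ℝ → ℝ} (h : StripSol K ζ) :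
    StripSol (fun τ z => -K τ (-z)) (fun τ => -ζ τ) := by
  intro τ
  have := (h τ).neg
  simp only [neg_neg]
  exact this

theorem up (h : StripODE K M L) {ζ : ℝ → ℝ} (h1 : StripSol K ζ) {t : ℝ} (ht : 1 ≤ ζ t)
    {s : ℝ} (hs : s ≤ t) : 1 + (t - s) / 2 ≤ ζ s := by
  have hder : ∀ x, HasDerivAt (fun x => -ζ (t - x)) (K (t - x) (ζ (t - x))) x := by
    intro x
    have := ((h1 (t - x)).scomp x ((hasDerivAt_id x).const_sub t)).neg
    simpa using! this
  have := image_le_of_deriv_right_lt_deriv_boundary (a := 0) (b := t - s)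
    (f := fun x => -ζ (t - x)) (f' := fun x => K (t - x) (ζ (t - x)))
    (B := fun x => -(1 + x / 2)) (B' := fun x => -(1 / 2))
    (fun x _ => (hder x).continuousAt.continuousWithinAt)
    (fun x _ => (hder x).hasDerivWithinAt) (by simpa using ht)
    (fun x => by
      exact (((hasDerivAt_id x).div_const 2).const_add 1).neg)
    (fun x hx hxe => by
      have hx0 := hx.1
      have := h.top (t - x) (ζ (t - x)) (by linarith)
      linarith) (x := t - s) ⟨by linarith, le_rfl⟩
  simp only [sub_sub_cancel] at this
  linarith

theorem down (h : StripODE K M L) {ζ : ℝ → ℝ} (h1 : StripSol K ζ) {t : ℝ} (ht : ζ t ≤ -1)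
    {s : ℝ} (hs : s ≤ t) : ζ s ≤ -(1 + (t - s) / 2) := by
  have := h.neg.up h1.neg (t := t) (by linarith) hs
  linarith

theorem hits_top (h : StripODE K M L) {ζ : ℝ → ℝ} (h1 : StripSol K ζ) {a : ℝ} (ha : 1 ≤ ζ a) :
    ∃ T, ζ T = 1 := by
  by_cases hb : ∃ b, ζ b ≤ 1
  · obtain ⟨b, hb⟩ := hb
    exact mem_range_of_exists_le_of_exists_ge h1.continuous ⟨b, hb⟩ ⟨a, ha⟩
  · push Not at hb
    exfalso
    have hza : 0 ≤ ζ a := by linarith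
    have := h.up h1 (t := a + 2 * ζ a) (hb _).le (s := a) (by linarith)
    linarith

theorem hits_bot (h : StripODE K M L) {ζ : ℝ → ℝ} (h1 : StripSol K ζ) {a : ℝ} (ha : ζ a ≤ -1) :
    ∃ T, ζ T = -1 := by
  obtain ⟨T, hT⟩ := h.neg.hits_top h1.neg (a := a) (by linarith)
  exact ⟨T, by linarith⟩

/-- The bounded solution is unique. -/
theorem bounded_unique (h : StripODE K M L) {ζ ξ : ℝ → ℝ} (h1 : StripSol K ζ) (h2 : StripSol K ξ)
    (hb1 : ∀ τ, |ζ τ| < 1) (hb2 : ∀ τ, |ξ τ| < 1) : ζ = ξ := by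
  have main : ∀ {ζ ξ : ℝ → ℝ}, StripSol K ζ → StripSol K ξ → (∀ τ, |ζ τ| < 1) →
      (∀ τ, |ξ τ| < 1) → ¬ (ζ 0 < ξ 0) := by
    intro ζ ξ h1 h2 hb1 hb2 hlt
    have hlt' := fun t => h.order h1 h2 hlt t
    have hder : ∀ t, HasDerivAt (fun t => Real.exp (t / 2) * (ξ t - ζ t))
        (Real.exp (t / 2) * (1 / 2) * (ξ t - ζ t)
          + Real.exp (t / 2) * (K t (ξ t) - K t (ζ t))) t := by
      intro t
      exact (((hasDerivAt_id t).div_const 2).exp).mul ((h2 t).sub (h1 t))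
    have hanti : Antitone (fun t => Real.exp (t / 2) * (ξ t - ζ t)) := by
      apply antitone_of_hasDerivAt_nonpos hder
      intro t
      have := h.dec t (ζ t) (ξ t) (abs_lt.1 (hb1 t)).1.le (hlt' t).le (abs_lt.1 (hb2 t)).2.le
      have he := Real.exp_pos (t / 2)
      have : Real.exp (t / 2) * (1 / 2) * (ξ t - ζ t)
          + Real.exp (t / 2) * (K t (ξ t) - K t (ζ t)) =
          Real.exp (t / 2) * ((ξ t - ζ t) / 2 + (K t (ξ t) - K t (ζ t))) := by ring
      change _ ≤ (0 : ℝ)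
      beta_reduce
      rw [this]
      exact mul_nonpos_of_nonneg_of_nonpos he.le (by linarith)
    have hd : 0 < ξ 0 - ζ 0 := by linarith
    have hlim : Tendsto (fun t : ℝ => Real.exp (t / 2) * 2) atBot (𝓝 (0 * 2)) := by
      apply Tendsto.mul_const
      exact Real.tendsto_exp_atBot.comp (tendsto_id.atBot_div_const (by norm_num))
    rw [zero_mul] at hlim
    obtain ⟨t, ht, ht0⟩ := ((hlim.eventually_lt_const hd).and (eventually_le_atBot 0)).exists
    have h3 := hanti ht0
    simp only [zero_div, Real.exp_zero, one_mul] at h3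
    have h4 : ξ t - ζ t ≤ 2 := by
      have := abs_lt.1 (hb1 t); have := abs_lt.1 (hb2 t); linarith
    have := mul_le_mul_of_nonneg_left h4 (Real.exp_pos (t / 2)).le
    linarith
  exact h.unique h1 h2 (a := 0) (le_antisymm (not_lt.1 (main h2 h1 hb2 hb1))
    (not_lt.1 (main h1 h2 hb1 hb2)))

theorem exists_bounded (h : StripODE K M L) : ∃ ζ, StripSol K ζ ∧ ∀ τ, |ζ τ| < 1 := by
  choose Ψ hΨ0 hΨ using fun z => h.exists_sol 0 z
  let A : Set ℝ := {z | ∃ T, Ψ z T < -1}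
  have hA1 : (-2 : ℝ) ∈ A := ⟨0, by rw [hΨ0]; norm_num⟩
  -- a solution which is somewhere above `1` is never below `-1`
  have hsep : ∀ ζ, StripSol K ζ → ∀ S T, 1 < ζ S → ¬ ζ T < -1 := by
    intro ζ hζ S T hS hT
    rcases le_total S T with hST | hST
    · have := h.down hζ hT.le hST; linarith
    · have := h.up hζ hS.le hST; linarith
  have hA2 : BddAbove A := by
    refine ⟨2, fun z hz => ?_⟩
    obtain ⟨T, hT⟩ := hz
    by_contra hz2
    push Not at hz2
    exact hsep _ (hΨ z) 0 T (by rw [hΨ0]; linarith) hT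
  have hne : A.Nonempty := ⟨_, hA1⟩
  have h1 : ∀ T, -1 ≤ Ψ (sSup A) T := by
    intro T
    by_contra hT
    push Not at hT
    obtain ⟨m, hm1, hm2⟩ := exists_between hT
    obtain ⟨ξ, hξ0, hξ⟩ := h.exists_sol T m
    have hlt := h.order (hΨ (sSup A)) hξ (a := T) (by rw [hξ0]; exact hm1) 0
    rw [hΨ0] at hlt
    have heq : Ψ (ξ 0) = ξ := h.unique (hΨ _) hξ (a := 0) (hΨ0 _)
    have : ξ 0 ∈ A := ⟨T, by rw [heq, hξ0]; exact hm2⟩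
    exact absurd (le_csSup hA2 this) (not_le.2 hlt)
  have h2 : ∀ T, Ψ (sSup A) T ≤ 1 := by
    intro T
    by_contra hT
    push Not at hT
    obtain ⟨m, hm1, hm2⟩ := exists_between hT
    obtain ⟨ξ, hξ0, hξ⟩ := h.exists_sol T m
    have hlt := h.order hξ (hΨ (sSup A)) (a := T) (by rw [hξ0]; exact hm2) 0
    rw [hΨ0] at hlt
    obtain ⟨z, hzA, hz⟩ := exists_lt_of_lt_csSup hne hlt
    obtain ⟨S, hS⟩ := hzA
    have := h.order hξ (hΨ z) (a := 0) (by rw [hΨ0]; exact hz) T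
    exact hsep _ (hΨ z) T S (by rw [hξ0] at this; linarith) hS
  refine ⟨Ψ (sSup A), hΨ _, fun τ => abs_lt.2 ⟨?_, ?_⟩⟩
  · by_contra hc
    have := h.down (hΨ (sSup A)) (not_lt.1 hc) (s := τ - 1) (by linarith)
    have := h1 (τ - 1)
    linarith
  · by_contra hc
    have := h.up (hΨ (sSup A)) (not_lt.1 hc) (s := τ - 1) (by linarith)
    have := h2 (τ - 1)
    linarith

end StripODE

/-- The family of all solutions, indexed by the (signed) place where they enter the strip. -/
structure StripFam (K : ℝ → ℝ → ℝ) (Z : ℝ → ℝ → ℝ) : Prop where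
  sol : ∀ b, StripSol K (Z b)
  pos : ∀ b, 0 < b → Z b (Real.log b) = 1
  neg : ∀ b, b < 0 → Z b (Real.log (-b)) = -1
  zero : ∀ τ, |Z 0 τ| < 1
  mono : ∀ τ, StrictMono (fun b => Z b τ)
  surj : ∀ τ z, ∃ b, Z b τ = z
  cont : Continuous fun p : ℝ × ℝ => Z p.1 p.2
  mem : ∀ τ b, |Z b τ| ≤ 1 ↔ |b| ≤ Real.exp τ

theorem StripODE.exists_fam {K : ℝ → ℝ → ℝ} {M L : ℝ≥0} (h : StripODE K M L) :
    ∃ Z, StripFam K Z := by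
  have hex : ∀ b : ℝ, ∃ ζ, StripSol K ζ ∧ (0 < b → ζ (Real.log b) = 1) ∧
      (b < 0 → ζ (Real.log (-b)) = -1) ∧ (b = 0 → ∀ τ, |ζ τ| < 1) := by
    intro b
    rcases lt_trichotomy b 0 with hb | hb | hb
    · obtain ⟨ζ, h0, h1⟩ := h.exists_sol (Real.log (-b)) (-1)
      exact ⟨ζ, h1, fun h' => absurd h' hb.not_gt, fun _ => h0, fun h' => absurd h' hb.ne⟩
    · obtain ⟨ζ, h0, h1⟩ := h.exists_bounded
      exact ⟨ζ, h0, fun h' => absurd h' (by simp [hb]), fun h' => absurd h' (by simp [hb]),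
        fun _ => h1⟩
    · obtain ⟨ζ, h0, h1⟩ := h.exists_sol (Real.log b) 1
      exact ⟨ζ, h1, fun _ => h0, fun h' => absurd h' hb.not_gt, fun h' => absurd h' hb.ne'⟩
  choose Z hsol hpos hneg hzero' using hex
  have hzero := hzero' 0 rfl
  have hmono : ∀ τ, StrictMono (fun b => Z b τ) := by
    intro τ b b' hbb
    rcases lt_trichotomy b' 0 with hb' | hb' | hb'
    · have hb : b < 0 := hbb.trans hb'
      apply h.order (hsol b) (hsol b') (a := Real.log (-b'))
      rw [hneg b' hb']
      have hl : Real.log (-b') < Real.log (-b) := Real.log_lt_log (by linarith) (by linarith)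
      have := h.down (hsol b) (hneg b hb).le hl.le
      linarith
    · subst hb'
      apply h.order (hsol b) (hsol 0) (a := Real.log (-b))
      rw [hneg b hbb]
      exact (abs_lt.1 (hzero _)).1
    · rcases lt_trichotomy b 0 with hb | hb | hb
      · apply h.order (hsol b) (hsol b') (a := min (Real.log (-b)) (Real.log b'))
        have h1 := h.down (hsol b) (hneg b hb).le (min_le_left _ (Real.log b'))
        have h2 := h.up (hsol b') (hpos b' hb').ge (min_le_right (Real.log (-b)) _)
        have h3 := min_le_left (Real.log (-b)) (Real.log b')
        have h4 := min_le_right (Real.log (-b)) (Real.log b')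
        linarith
      · subst hb
        apply h.order (hsol 0) (hsol b') (a := Real.log b')
        rw [hpos b' hb']
        exact (abs_lt.1 (hzero _)).2
      · apply h.order (hsol b) (hsol b') (a := Real.log b)
        rw [hpos b hb]
        have hl : Real.log b < Real.log b' := Real.log_lt_log hb hbb
        have := h.up (hsol b') (hpos b' hb').ge hl.le
        linarith
  have hsurj : ∀ τ z, ∃ b, Z b τ = z := by
    intro τ z
    obtain ⟨ζ, h0, h1⟩ := h.exists_sol τ z
    suffices ∃ b, Z b = ζ by
      obtain ⟨b, hb⟩ := this
      exact ⟨b, by rw [hb, h0]⟩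
    by_cases ht : ∃ T, ζ T = 1
    · obtain ⟨T, hT⟩ := ht
      refine ⟨Real.exp T, h.unique (hsol _) h1 (a := T) ?_⟩
      have := hpos _ (Real.exp_pos T)
      rw [Real.log_exp] at this
      rw [this, hT]
    by_cases ht' : ∃ T, ζ T = -1
    · obtain ⟨T, hT⟩ := ht'
      refine ⟨-Real.exp T, h.unique (hsol _) h1 (a := T) ?_⟩
      have := hneg (-Real.exp T) (by linarith [Real.exp_pos T])
      rw [neg_neg, Real.log_exp] at this
      rw [this, hT]
    · refine ⟨0, h.bounded_unique (hsol 0) h1 hzero fun t => abs_lt.2 ⟨?_, ?_⟩⟩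
      · by_contra hc
        exact ht' (h.hits_bot h1 (not_lt.1 hc))
      · by_contra hc
        exact ht (h.hits_top h1 (not_lt.1 hc))
  refine ⟨Z, hsol, hpos, hneg, hzero, hmono, hsurj, ?_, ?_⟩
  · rw [continuous_iff_continuousAt]
    rintro ⟨b, τ⟩
    have hτ : ∀ b, Continuous (Z b) := fun b => (hsol b).continuous
    refine tendsto_order.2 ⟨fun y hy => ?_, fun y hy => ?_⟩
    · simp only at hy
      obtain ⟨y', hy1, hy2⟩ := exists_between hy
      obtain ⟨b1, hb1⟩ := hsurj τ y'
      have hb : b1 < b := (hmono τ).lt_iff_lt.1 (by simpa only [hb1] using hy2)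
      have e1 : ∀ᶠ p : ℝ × ℝ in 𝓝 (b, τ), b1 < p.1 :=
        continuousAt_const.eventually_lt continuousAt_fst hb
      have e2 : ∀ᶠ p : ℝ × ℝ in 𝓝 (b, τ), y < Z b1 p.2 :=
        continuousAt_const.eventually_lt ((hτ b1).comp continuous_snd).continuousAt
          (by simp only; rw [hb1]; exact hy1)
      filter_upwards [e1, e2] with p h1 h2
      exact h2.trans (hmono p.2 h1)
    · simp only at hy
      obtain ⟨y', hy1, hy2⟩ := exists_between hy
      obtain ⟨b1, hb1⟩ := hsurj τ y'
      have hb : b < b1 := (hmono τ).lt_iff_lt.1 (by simpa only [hb1] using hy1)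
      have e1 : ∀ᶠ p : ℝ × ℝ in 𝓝 (b, τ), p.1 < b1 :=
        continuousAt_fst.eventually_lt continuousAt_const hb
      have e2 : ∀ᶠ p : ℝ × ℝ in 𝓝 (b, τ), Z b1 p.2 < y :=
        ((hτ b1).comp continuous_snd).continuousAt.eventually_lt continuousAt_const
          (by change Z b1 τ < y; rw [hb1]; exact hy2)
      filter_upwards [e1, e2] with p h1 h2
      exact (hmono p.2 h1).trans h2
  · intro τ b
    have h1 := hpos _ (Real.exp_pos τ)
    have h2 := hneg (-Real.exp τ) (by linarith [Real.exp_pos τ])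
    rw [neg_neg, Real.log_exp] at h2
    rw [Real.log_exp] at h1
    rw [abs_le, abs_le]
    have i1 := (hmono τ).le_iff_le (a := b) (b := Real.exp τ)
    have i2 := (hmono τ).le_iff_le (a := -Real.exp τ) (b := b)
    simp only [h1, h2] at i1 i2
    rw [i1, i2]

/-- A globally defined perturbation of the linear saddle `(lam * u, -mu * w)`. -/
structure SadSys (lam mu : ℝ) (ε : ℝ≥0) (f g : ℝ × ℝ → ℝ) : Prop where
  lipf : LipschitzWith ε f
  lipg : LipschitzWith ε g
  f0 : f (0, 0) = 0
  g0 : g (0, 0) = 0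
  hlam : (ε : ℝ) < lam
  hmu : (ε : ℝ) < mu
  small1 : (mu + ε) * ε ≤ (lam - ε) ^ 2 / 2
  small2 : (lam + ε) * ε ≤ (mu - ε) ^ 2 / 2

/-- The vector field of a saddle system. -/
def sadF (lam mu : ℝ) (f g : ℝ × ℝ → ℝ) (p : ℝ × ℝ) : ℝ × ℝ :=
  (lam * p.1 + f p, -mu * p.2 + g p)

/-- Clamping to `[-1, 1]`. -/
def clp (z : ℝ) : ℝ := max (-1) (min 1 z)

theorem clp_lip (z z' : ℝ) : |clp z - clp z'| ≤ |z - z'| := by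
  have h : LipschitzWith 1 clp := (LipschitzWith.id.const_min 1).const_max (-1)
  simpa [Real.dist_eq] using h.dist_le_mul z z'

theorem clp_cont : Continuous clp := by unfold clp; fun_prop

theorem clp_of_mem {z : ℝ} (h : |z| ≤ 1) : clp z = z := by
  rw [abs_le] at h
  unfold clp
  rw [min_eq_right h.2, max_eq_right h.1]

theorem clp_abs (z : ℝ) : |clp z| ≤ 1 := by
  unfold clp
  rw [abs_le]
  exact ⟨le_max_left _ _, max_le (by norm_num) (min_le_left _ _)⟩

theorem clp_top {z : ℝ} (h : 1 ≤ z) : clp z = 1 := by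
  unfold clp
  rw [min_eq_left h]; norm_num

theorem clp_bot {z : ℝ} (h : z ≤ -1) : clp z = -1 := by
  unfold clp
  rw [min_eq_right (by linarith), max_eq_left h]

/-- A scaled component of the perturbation. -/
noncomputable def scl (f : ℝ × ℝ → ℝ) (τ z : ℝ) : ℝ :=
  f (Real.exp τ, Real.exp τ * clp z) * Real.exp (-τ)

/-- The logarithmic derivative of `u` along orbits. -/
noncomputable def rhoF (lam : ℝ) (f : ℝ × ℝ → ℝ) (τ z : ℝ) : ℝ := lam + scl f τ z

/-- The derivative of `w`, divided by `u`. -/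
noncomputable def etaF (mu : ℝ) (g : ℝ × ℝ → ℝ) (τ z : ℝ) : ℝ := -mu * clp z + scl g τ z

/-- The right-hand side of the equation for `z = w / u` as a function of `τ = log u`. -/
noncomputable def KF (lam mu : ℝ) (f g : ℝ × ℝ → ℝ) (τ z : ℝ) : ℝ :=
  etaF mu g τ z / rhoF lam f τ z - clp z

section scl
variable {ε : ℝ≥0} {f : ℝ × ℝ → ℝ}

theorem scl_cont (hf : LipschitzWith ε f) : Continuous fun p : ℝ × ℝ => scl f p.1 p.2 := by
  unfold scl
  have := hf.continuous
  have := clp_cont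
  fun_prop

theorem scl_lip (hf : LipschitzWith ε f) (τ z z' : ℝ) :
    |scl f τ z - scl f τ z'| ≤ ε * |clp z - clp z'| := by
  unfold scl
  have h := hf.dist_le_mul (Real.exp τ, Real.exp τ * clp z) (Real.exp τ, Real.exp τ * clp z')
  have he := Real.exp_pos τ
  rw [Prod.dist_eq, dist_self, max_eq_right dist_nonneg, Real.dist_eq, Real.dist_eq, ← mul_sub,
    abs_mul, abs_of_pos he] at h
  rw [← sub_mul, abs_mul, abs_of_pos (Real.exp_pos (-τ)), Real.exp_neg, ← div_eq_mul_inv,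
    div_le_iff₀ he]
  linarith

theorem scl_bdd (hf : LipschitzWith ε f) (h0 : f (0, 0) = 0) (τ z : ℝ) :
    |scl f τ z| ≤ ε := by
  unfold scl
  have h := hf.dist_le_mul (Real.exp τ, Real.exp τ * clp z) (0, 0)
  have he := Real.exp_pos τ
  rw [Prod.dist_eq, Real.dist_eq, Real.dist_eq, Real.dist_eq, h0, sub_zero, sub_zero, sub_zero,
    abs_mul, abs_of_pos he] at h
  have h2 : max (Real.exp τ) (Real.exp τ * |clp z|) ≤ Real.exp τ :=
    max_le le_rfl (mul_le_of_le_one_right he.le (clp_abs z))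
  rw [abs_mul, abs_of_pos (Real.exp_pos (-τ)), Real.exp_neg, ← div_eq_mul_inv, div_le_iff₀ he]
  exact h.trans (mul_le_mul_of_nonneg_left h2 ε.2)

end scl

namespace SadSys

variable {lam mu : ℝ} {ε : ℝ≥0} {f g : ℝ × ℝ → ℝ}

theorem swap (h : SadSys lam mu ε f g) :
    SadSys mu lam ε (fun p => -g p.swap) (fun p => -f p.swap) where
  lipf := by
    refine LipschitzWith.of_dist_le_mul fun x y => ?_
    have := h.lipg.dist_le_mul x.swap y.swap
    rw [dist_neg_neg]
    simpa [Prod.dist_eq, max_comm] using this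
  lipg := by
    refine LipschitzWith.of_dist_le_mul fun x y => ?_
    have := h.lipf.dist_le_mul x.swap y.swap
    rw [dist_neg_neg]
    simpa [Prod.dist_eq, max_comm] using this
  f0 := by simpa using h.g0
  g0 := by simpa using h.f0
  hlam := h.hmu
  hmu := h.hlam
  small1 := h.small2
  small2 := h.small1

theorem rho_bounds (h : SadSys lam mu ε f g) (τ z : ℝ) :
    lam - ε ≤ rhoF lam f τ z ∧ rhoF lam f τ z ≤ lam + ε := by
  have := abs_le.1 (scl_bdd h.lipf h.f0 τ z)
  unfold rhoF
  constructor <;> linarith [this.1, this.2]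

theorem rho_pos (h : SadSys lam mu ε f g) (τ z : ℝ) : 0 < rhoF lam f τ z := by
  linarith [(h.rho_bounds τ z).1, h.hlam]

theorem rho_cont (h : SadSys lam mu ε f g) : Continuous fun p : ℝ × ℝ => rhoF lam f p.1 p.2 := by
  unfold rhoF
  exact continuous_const.add (scl_cont h.lipf)

theorem eta_bound (h : SadSys lam mu ε f g) (τ z : ℝ) : |etaF mu g τ z| ≤ mu + ε := by
  unfold etaF
  have h1 := scl_bdd h.lipg h.g0 τ z
  have hm : 0 < mu := lt_of_le_of_lt ε.2 h.hmu
  have h2 : |-mu * clp z| ≤ mu := by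
    rw [abs_mul, abs_neg, abs_of_pos hm]
    exact mul_le_of_le_one_right hm.le (clp_abs z)
  exact (abs_add_le _ _).trans (add_le_add h2 h1)

theorem K_sub (h : SadSys lam mu ε f g) (τ z z' : ℝ) :
    ∃ R, |R| ≤ |clp z' - clp z| / 2 ∧
    KF lam mu f g τ z' - KF lam mu f g τ z =
      (etaF mu g τ z' - etaF mu g τ z) / rhoF lam f τ z' + R - (clp z' - clp z) := by
  have p1 := h.rho_pos τ z
  have p2 := h.rho_pos τ z'
  refine ⟨etaF mu g τ z * (rhoF lam f τ z - rhoF lam f τ z') /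
    (rhoF lam f τ z * rhoF lam f τ z'), ?_, ?_⟩
  · rw [abs_div, abs_mul, abs_of_pos (mul_pos p1 p2), div_le_iff₀ (mul_pos p1 p2)]
    have h1 := h.eta_bound τ z
    have h2 : |rhoF lam f τ z - rhoF lam f τ z'| ≤ ε * |clp z' - clp z| := by
      unfold rhoF
      rw [add_sub_add_left_eq_sub, abs_sub_comm (clp z')]
      exact scl_lip h.lipf τ z z'
    have hm : 0 < mu := lt_of_le_of_lt ε.2 h.hmu
    have h3 : |etaF mu g τ z| * |rhoF lam f τ z - rhoF lam f τ z'| ≤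
        (mu + ε) * (ε * |clp z' - clp z|) :=
      mul_le_mul h1 h2 (abs_nonneg _) (by positivity)
    have h4 : (lam - ε) ^ 2 ≤ rhoF lam f τ z * rhoF lam f τ z' := by
      rw [sq]
      exact mul_le_mul (h.rho_bounds τ z).1 (h.rho_bounds τ z').1 (by linarith [h.hlam]) p1.le
    have h5 := h.small1
    have h6 : (mu + ε) * ε ≤ rhoF lam f τ z * rhoF lam f τ z' / 2 := by linarith
    have h7 := mul_le_mul_of_nonneg_right h6 (abs_nonneg (clp z' - clp z))
    linarith
  · unfold KF
    field_simp
    ring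

theorem eta_sub (h : SadSys lam mu ε f g) (τ z z' : ℝ) :
    |etaF mu g τ z' - etaF mu g τ z + mu * (clp z' - clp z)| ≤ ε * |clp z' - clp z| := by
  have := scl_lip h.lipg τ z' z
  unfold etaF
  convert this using 2
  ring

/-- A Lipschitz constant. -/
noncomputable def LC (lam mu : ℝ) (ε : ℝ≥0) : ℝ≥0 := Real.toNNReal ((mu + ε) / (lam - ε) + 2)

theorem strip (h : SadSys lam mu ε f g) :
    StripODE (KF lam mu f g) (LC lam mu ε) (LC lam mu ε) := by
  have hm : 0 < mu := lt_of_le_of_lt ε.2 h.hmu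
  have hle : 0 < lam - ε := by linarith [h.hlam]
  have hLC : ((LC lam mu ε : ℝ≥0) : ℝ) = (mu + ε) / (lam - ε) + 2 :=
    Real.coe_toNNReal _ (by positivity)
  have hetac : Continuous fun p : ℝ × ℝ => etaF mu g p.1 p.2 := by
    unfold etaF
    exact (continuous_const.mul (clp_cont.comp continuous_snd)).add (scl_cont h.lipg)
  have hKc : Continuous fun p : ℝ × ℝ => KF lam mu f g p.1 p.2 := by
    unfold KF
    exact (hetac.div h.rho_cont fun p => (h.rho_pos p.1 p.2).ne').sub
      (clp_cont.comp continuous_snd)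
  refine ⟨fun z => ?_, fun τ => ?_, fun τ z => ?_, fun τ z hz => ?_, fun τ z hz => ?_,
    fun τ z z' h1 h2 h3 => ?_⟩
  · exact hKc.comp (by fun_prop : Continuous fun τ : ℝ => (τ, z))
  · refine LipschitzWith.of_dist_le_mul fun z' z => ?_
    rw [Real.dist_eq, Real.dist_eq, hLC]
    refine le_trans ?_ (mul_le_mul_of_nonneg_left (clp_lip z' z) (by positivity))
    obtain ⟨R, hR, he⟩ := h.K_sub τ z z'
    rw [he]
    have h4 : |(etaF mu g τ z' - etaF mu g τ z) / rhoF lam f τ z'| ≤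
        (mu + ε) / (lam - ε) * |clp z' - clp z| := by
      rw [abs_div, abs_of_pos (h.rho_pos τ z'), div_mul_eq_mul_div]
      refine div_le_div₀ (by positivity) ?_ hle (h.rho_bounds τ z').1
      have := h.eta_sub τ z z'
      have h5 := abs_sub_abs_le_abs_sub (etaF mu g τ z' - etaF mu g τ z) (-(mu * (clp z' - clp z)))
      rw [sub_neg_eq_add, abs_neg, abs_mul, abs_of_pos hm] at h5
      linarith
    have h5 := abs_sub ((etaF mu g τ z' - etaF mu g τ z) / rhoF lam f τ z' + R) (clp z' - clp z)
    have h6 := abs_add_le ((etaF mu g τ z' - etaF mu g τ z) / rhoF lam f τ z') R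
    have := abs_nonneg (clp z' - clp z)
    linarith
  · rw [hLC]
    unfold KF
    have h4 : |etaF mu g τ z / rhoF lam f τ z| ≤ (mu + ε) / (lam - ε) := by
      rw [abs_div, abs_of_pos (h.rho_pos τ z)]
      exact div_le_div₀ (by positivity) (h.eta_bound τ z) hle (h.rho_bounds τ z).1
    have h5 := abs_sub (etaF mu g τ z / rhoF lam f τ z) (clp z)
    have := clp_abs z
    linarith
  · unfold KF
    have h4 : etaF mu g τ z / rhoF lam f τ z ≤ 0 := by
      apply div_nonpos_of_nonpos_of_nonneg _ (h.rho_pos τ z).le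
      unfold etaF
      have := abs_le.1 (scl_bdd h.lipg h.g0 τ z)
      rw [clp_top hz]
      linarith [this.2, h.hmu]
    rw [clp_top hz]
    linarith
  · unfold KF
    have h4 : 0 ≤ etaF mu g τ z / rhoF lam f τ z := by
      apply div_nonneg _ (h.rho_pos τ z).le
      unfold etaF
      have := abs_le.1 (scl_bdd h.lipg h.g0 τ z)
      rw [clp_bot hz]
      linarith [this.1, h.hmu]
    rw [clp_bot hz]
    linarith
  · obtain ⟨R, hR, he⟩ := h.K_sub τ z z'
    rw [he]
    have e1 : clp z = z := clp_of_mem (abs_le.2 ⟨h1, by linarith⟩)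
    have e2 : clp z' = z' := clp_of_mem (abs_le.2 ⟨by linarith, h3⟩)
    have h4 : (etaF mu g τ z' - etaF mu g τ z) / rhoF lam f τ z' ≤ 0 := by
      apply div_nonpos_of_nonpos_of_nonneg _ (h.rho_pos τ z').le
      have := (abs_le.1 (h.eta_sub τ z z')).2
      rw [e1, e2, abs_of_nonneg (by linarith : 0 ≤ z' - z)] at this
      nlinarith [h.hmu]
    rw [e1, e2] at hR ⊢
    rw [abs_of_nonneg (by linarith : 0 ≤ z' - z)] at hR
    have := (abs_le.1 hR).2
    linarith

/-- In the quadrant the field is given by `rhoF` and `etaF`. -/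
theorem field_eq (u w : ℝ) (hu : 0 < u) (hw : |w| ≤ u) :
    sadF lam mu f g (u, w) =
      (u * rhoF lam f (Real.log u) (w / u), u * etaF mu g (Real.log u) (w / u)) := by
  have hz : |w / u| ≤ 1 := by
    rw [abs_div, abs_of_pos hu]; exact (div_le_one hu).2 hw
  unfold sadF rhoF etaF scl
  rw [clp_of_mem hz, Real.exp_log hu, Real.exp_neg, Real.exp_log hu, mul_div_cancel₀ _ hu.ne']
  ext
  · simp only; field_simp
  · simp only; field_simp

end SadSys

namespace SadSys

variable {lam mu : ℝ} {ε : ℝ≥0} {f g : ℝ × ℝ → ℝ} {Z : ℝ → ℝ → ℝ}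

/-- Orbits in the quadrant `|w| ≤ u` follow the family `Z`. -/
theorem follow (h : SadSys lam mu ε f g) (hZ : StripFam (KF lam mu f g) Z) {γ : ℝ → ℝ × ℝ}
    {t0 t1 : ℝ} (ht : t0 ≤ t1)
    (hγ : ∀ t ∈ Icc t0 t1, HasDerivAt γ (sadF lam mu f g (γ t)) t)
    (hu : ∀ t ∈ Icc t0 t1, 0 < (γ t).1) (hw : ∀ t ∈ Icc t0 t1, |(γ t).2| ≤ (γ t).1) (b : ℝ)
    (hb : (γ t0).2 / (γ t0).1 = Z b (Real.log (γ t0).1)) :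
    (γ t1).2 / (γ t1).1 = Z b (Real.log (γ t1).1) := by
  set r : ℝ → ℝ := fun t => rhoF lam f (Real.log (γ t).1) ((γ t).2 / (γ t).1) with hr
  have d1 : ∀ t ∈ Icc t0 t1, HasDerivAt (fun t => (γ t).1) ((γ t).1 * r t) t := by
    intro t ht
    have h1 := (hγ t ht).fst
    have h2 := field_eq (lam := lam) (mu := mu) (f := f) (g := g) _ _ (hu t ht) (hw t ht)
    rw [Prod.mk.eta] at h2
    rw [h2] at h1
    exact h1
  have d2 : ∀ t ∈ Icc t0 t1, HasDerivAt (fun t => (γ t).2)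
      ((γ t).1 * etaF mu g (Real.log (γ t).1) ((γ t).2 / (γ t).1)) t := by
    intro t ht
    have h1 := (hγ t ht).snd
    have h2 := field_eq (lam := lam) (mu := mu) (f := f) (g := g) _ _ (hu t ht) (hw t ht)
    rw [Prod.mk.eta] at h2
    rw [h2] at h1
    exact h1
  have dl : ∀ t ∈ Icc t0 t1, HasDerivAt (fun t => Real.log (γ t).1) (r t) t := by
    intro t ht
    have := (d1 t ht).log (hu t ht).ne'
    rwa [mul_div_cancel_left₀ _ (hu t ht).ne'] at this
  have dz : ∀ t ∈ Icc t0 t1, HasDerivAt (fun t => (γ t).2 / (γ t).1)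
      (KF lam mu f g (Real.log (γ t).1) ((γ t).2 / (γ t).1) * r t) t := by
    intro t ht
    have h1 := (d2 t ht).div (d1 t ht) (hu t ht).ne'
    refine HasDerivAt.congr_deriv h1 (Eq.symm ?_)
    have hp := hu t ht
    have hz : |(γ t).2 / (γ t).1| ≤ 1 := by
      rw [abs_div, abs_of_pos hp]; exact (div_le_one hp).2 (hw t ht)
    have hrp : 0 < r t := h.rho_pos _ _
    unfold KF
    rw [clp_of_mem hz]
    change (_ / r t - _) * r t = _
    field_simp
  have dZ : ∀ t ∈ Icc t0 t1, HasDerivAt (fun t => Z b (Real.log (γ t).1))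
      (KF lam mu f g (Real.log (γ t).1) (Z b (Real.log (γ t).1)) * r t) t := fun t ht =>
    (hZ.sol b (Real.log (γ t).1)).comp t (dl t ht)
  have hlip : ∀ t, LipschitzWith (LC lam mu ε * Real.toNNReal (lam + ε))
      (fun x => KF lam mu f g (Real.log (γ t).1) x * r t) := by
    intro t
    refine LipschitzWith.of_dist_le_mul fun x y => ?_
    have h1 := (h.strip.lip (Real.log (γ t).1)).dist_le_mul x y
    rw [Real.dist_eq] at h1
    have h2 := h.rho_bounds (Real.log (γ t).1) ((γ t).2 / (γ t).1)
    have h3 := h.rho_pos (Real.log (γ t).1) ((γ t).2 / (γ t).1)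
    have h4 : ((Real.toNNReal (lam + ε) : ℝ≥0) : ℝ) = lam + ε :=
      Real.coe_toNNReal _ (by linarith [h2.2])
    rw [Real.dist_eq, ← sub_mul, abs_mul, abs_of_pos (show 0 < r t from h3)]
    push_cast
    rw [h4]
    have := mul_le_mul h1 h2.2 h3.le (by positivity)
    change _ * rhoF lam f _ _ ≤ _
    linarith
  have := ODE_solution_unique (v := fun t x => KF lam mu f g (Real.log (γ t).1) x * r t)
    hlip (f := fun t => (γ t).2 / (γ t).1) (g := fun t => Z b (Real.log (γ t).1))
    (a := t0) (b := t1)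
    (fun t ht => (dz t ht).continuousAt.continuousWithinAt)
    (fun t ht => (dz t ⟨ht.1, ht.2.le⟩).hasDerivWithinAt)
    (fun t ht => (dZ t ht).continuousAt.continuousWithinAt)
    (fun t ht => (dZ t ⟨ht.1, ht.2.le⟩).hasDerivWithinAt) hb
  exact this ⟨ht, le_rfl⟩

/-- Orbits in the quadrant move to the right. -/
theorem increase (h : SadSys lam mu ε f g) {γ : ℝ → ℝ × ℝ}
    {t0 t1 : ℝ} (ht : t0 < t1)
    (hγ : ∀ t ∈ Icc t0 t1, HasDerivAt γ (sadF lam mu f g (γ t)) t)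
    (hu : ∀ t ∈ Icc t0 t1, 0 < (γ t).1) (hw : ∀ t ∈ Icc t0 t1, |(γ t).2| ≤ (γ t).1) :
    (γ t0).1 < (γ t1).1 := by
  have d1 : ∀ t ∈ Icc t0 t1, HasDerivAt (fun t => (γ t).1)
      ((γ t).1 * rhoF lam f (Real.log (γ t).1) ((γ t).2 / (γ t).1)) t := by
    intro t ht
    have h1 := (hγ t ht).fst
    have h2 := field_eq (lam := lam) (mu := mu) (f := f) (g := g) _ _ (hu t ht) (hw t ht)
    rw [Prod.mk.eta] at h2
    rw [h2] at h1
    exact h1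
  have := strictMonoOn_of_deriv_pos (convex_Icc t0 t1) (f := fun t => (γ t).1)
    (fun t ht => (d1 t ht).continuousAt.continuousWithinAt) (fun t ht => by
      have ht' := interior_subset ht
      rw [(d1 t ht').deriv]
      exact mul_pos (hu t ht') (h.rho_pos _ _))
  exact this ⟨le_rfl, ht.le⟩ ⟨ht.le, le_rfl⟩ ht

/-- Time parametrization of the orbits in the quadrant. -/
theorem realize (h : SadSys lam mu ε f g) (hZ : StripFam (KF lam mu f g) Z) (b : ℝ) :
    ∃ (T : ℝ → ℝ) (Γ : ℝ → ℝ × ℝ), StrictMono T ∧ Continuous T ∧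
      (∀ x, Γ (T x) = (Real.exp x, Real.exp x * Z b x)) ∧
      ∀ x, |b| ≤ Real.exp x → HasDerivAt Γ (sadF lam mu f g (Γ (T x))) (T x) := by
  set k : ℝ → ℝ := fun s => (rhoF lam f s (Z b s))⁻¹ with hk
  have hkc : Continuous k := by
    refine Continuous.inv₀ ?_ fun s => (h.rho_pos _ _).ne'
    exact h.rho_cont.comp (continuous_id.prodMk (hZ.sol b).continuous)
  have hkp : ∀ s, 0 < k s := fun s => inv_pos.2 (h.rho_pos _ _)
  set T : ℝ → ℝ := fun x => ∫ s in (0 : ℝ)..x, k s with hT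
  have dT : ∀ x, HasDerivAt T (k x) x := fun x => hkc.integral_hasStrictDerivAt 0 x |>.hasDerivAt
  have hTm : StrictMono T := strictMono_of_deriv_pos fun x => by rw [(dT x).deriv]; exact hkp x
  have hTc : Continuous T := continuous_iff_continuousAt.2 fun x => (dT x).continuousAt
  have hc : 0 < lam + ε := by linarith [(h.rho_bounds 0 0).2, h.rho_pos 0 0]
  have hmon : Monotone fun x => T x - (lam + ε)⁻¹ * x := by
    apply monotone_of_deriv_nonneg
    · exact fun x => ((dT x).sub ((hasDerivAt_id x).const_mul _)).differentiableAt
    · intro x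
      have : HasDerivAt (fun x => T x - (lam + ε)⁻¹ * x) _ x :=
        (dT x).sub ((hasDerivAt_id x).const_mul _)
      rw [this.deriv]
      have : (lam + ε)⁻¹ ≤ k x := inv_anti₀ (h.rho_pos _ _) (h.rho_bounds _ _).2
      linarith
  have hT0 : T 0 = 0 := by simp [hT]
  have hsurj : Function.Surjective T := by
    apply hTc.surjective
    · refine tendsto_atTop_mono' atTop (f₁ := fun x => (lam + ε)⁻¹ * x) ?_
        (tendsto_id.const_mul_atTop (inv_pos.2 hc))
      filter_upwards [eventually_ge_atTop 0] with x hx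
      have := hmon hx
      simp only [hT0] at this
      linarith
    · refine tendsto_atBot_mono' atBot (f₂ := T) (f₁ := fun x => (lam + ε)⁻¹ * x) ?_
        (tendsto_id.const_mul_atBot (inv_pos.2 hc))
      filter_upwards [eventually_le_atBot 0] with x hx
      have := hmon hx
      simp only [hT0] at this
      linarith
  set e := hTm.orderIsoOfSurjective T hsurj with he
  have he1 : ∀ x, e.symm (T x) = x := fun x => e.symm_apply_apply x
  have he2 : ∀ s, T (e.symm s) = s := fun x => e.apply_symm_apply x
  refine ⟨T, fun s => (Real.exp (e.symm s), Real.exp (e.symm s) * Z b (e.symm s)), hTm, hTc, ?_, ?_⟩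
  · intro x
    simp only [he1]
  · intro x hx
    have hd : HasDerivAt e.symm (rhoF lam f x (Z b x)) (T x) := by
      have := HasDerivAt.of_local_left_inverse (f := T) (g := e.symm) (f' := k x) (a := T x)
        e.symm.continuous.continuousAt (by rw [he1]; exact dT x) (hkp x).ne'
        (Eventually.of_forall he2)
      simpa [hk] using this
    have hd1 : HasDerivAt (fun s => Real.exp (e.symm s))
        (Real.exp x * rhoF lam f x (Z b x)) (T x) := by
      have := hd.exp
      rwa [he1] at this
    have hZd : HasDerivAt (fun s => Z b (e.symm s))
        (KF lam mu f g x (Z b x) * rhoF lam f x (Z b x)) (T x) := by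
      have h1 := hZ.sol b x
      exact HasDerivAt.comp (T x) (h₂ := Z b) (by rw [he1]; exact h1) hd
    have h3 := hd1.prodMk (hd1.mul hZd)
    simp only [he1] at h3 ⊢
    refine HasDerivAt.congr_deriv h3 (Eq.symm ?_)
    have hz : |Z b x| ≤ 1 := (hZ.mem x b).2 hx
    have hp := Real.exp_pos x
    have hzz : |Real.exp x * Z b x| ≤ Real.exp x := by
      rw [abs_mul, abs_of_pos hp]; exact mul_le_of_le_one_right hp.le hz
    rw [field_eq _ _ hp hzz, Real.log_exp, mul_div_cancel_left₀ _ hp.ne']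
    have hrp := h.rho_pos x (Z b x)
    unfold KF
    rw [clp_of_mem hz]
    ext
    · rfl
    · simp only
      field_simp
      ring

end SadSys

/-- The family map, extended to be continuous everywhere. -/
noncomputable def qmap (Z : ℝ → ℝ → ℝ) (a b : ℝ) : ℝ :=
  max a |b| * Z b (Real.log (max a |b|))

namespace StripFam

variable {K Z : ℝ → ℝ → ℝ}

theorem q_eq {a b : ℝ} (h : |b| ≤ a) : qmap Z a b = a * Z b (Real.log a) := by
  unfold qmap; rw [max_eq_left h]

theorem q_abs (hZ : StripFam K Z) (a b : ℝ) : |qmap Z a b| ≤ max a |b| := by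
  unfold qmap
  have h0 : 0 ≤ max a |b| := (abs_nonneg b).trans (le_max_right _ _)
  rcases h0.eq_or_lt with h | h
  · rw [← h]; simp
  · rw [abs_mul, abs_of_pos h]
    refine mul_le_of_le_one_right h0 ((hZ.mem _ _).2 ?_)
    rw [Real.exp_log h]
    exact le_max_right _ _

theorem q_cont (hZ : StripFam K Z) : Continuous fun p : ℝ × ℝ => qmap Z p.1 p.2 := by
  rw [continuous_iff_continuousAt]
  intro p
  have hm : Continuous fun p : ℝ × ℝ => max p.1 |p.2| := by fun_prop
  have h0 : 0 ≤ max p.1 |p.2| := (abs_nonneg p.2).trans (le_max_right _ _)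
  rcases h0.eq_or_lt with h | h
  · have e : qmap Z p.1 p.2 = 0 := by unfold qmap; rw [← h]; simp
    change Tendsto _ _ (𝓝 (qmap Z p.1 p.2))
    rw [e]
    refine squeeze_zero_norm (fun x => hZ.q_abs x.1 x.2) ?_
    have := hm.tendsto p
    rwa [← h] at this
  · unfold qmap
    have h1 : ContinuousAt (fun p : ℝ × ℝ => Real.log (max p.1 |p.2|)) p :=
      hm.continuousAt.log h.ne'
    have h2 : ContinuousAt (fun p : ℝ × ℝ => Z p.2 (Real.log (max p.1 |p.2|))) p :=
      ContinuousAt.comp (g := fun p : ℝ × ℝ => Z p.1 p.2)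
        (f := fun p : ℝ × ℝ => (p.2, Real.log (max p.1 |p.2|)))
        hZ.cont.continuousAt (continuousAt_snd.prodMk h1)
    exact hm.continuousAt.mul h2

theorem q_mono (hZ : StripFam K Z) {a b b' : ℝ} (hb : |b| ≤ a) (hb' : |b'| ≤ a) (h : b < b') :
    qmap Z a b < qmap Z a b' := by
  have ha : 0 < a := by
    rw [abs_le] at hb hb'; linarith
  rw [q_eq hb, q_eq hb']
  exact mul_lt_mul_of_pos_left (hZ.mono _ h) ha

theorem q_inj (hZ : StripFam K Z) {a b b' : ℝ} (hb : |b| ≤ a) (hb' : |b'| ≤ a)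
    (h : qmap Z a b = qmap Z a b') : b = b' := by
  rcases lt_trichotomy b b' with h1 | h1 | h1
  · exact absurd h (hZ.q_mono hb hb' h1).ne
  · exact h1
  · exact absurd h (hZ.q_mono hb' hb h1).ne'

theorem q_top (hZ : StripFam K Z) {a : ℝ} (ha : 0 ≤ a) : qmap Z a a = a := by
  rw [q_eq (by rw [abs_of_nonneg ha])]
  rcases ha.eq_or_lt with h | h
  · rw [← h]; simp
  · rw [hZ.pos a h, mul_one]

theorem q_bot (hZ : StripFam K Z) {a : ℝ} (ha : 0 ≤ a) : qmap Z a (-a) = -a := by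
  rw [q_eq (by rw [abs_neg, abs_of_nonneg ha])]
  rcases ha.eq_or_lt with h | h
  · rw [← h]; simp
  · have := hZ.neg (-a) (by linarith)
    rw [neg_neg] at this
    rw [this]; ring

theorem q_surj (hZ : StripFam K Z) {a c : ℝ} (hc : |c| ≤ a) : ∃ b, |b| ≤ a ∧ qmap Z a b = c := by
  have ha : 0 ≤ a := (abs_nonneg c).trans hc
  rcases ha.eq_or_lt with h | h
  · refine ⟨0, by simpa using ha, ?_⟩
    have hc0 : c = 0 := by rw [← h] at hc; simpa using hc
    have := hZ.q_abs a 0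
    rw [← h] at this ⊢
    simpa [hc0] using this
  · obtain ⟨b, hb⟩ := hZ.surj (Real.log a) (c / a)
    have hba : |b| ≤ a := by
      have := (hZ.mem (Real.log a) b).1 (by rw [hb, abs_div, abs_of_pos h, div_le_one h]; exact hc)
      rwa [Real.exp_log h] at this
    refine ⟨b, hba, ?_⟩
    rw [q_eq hba, hb, mul_div_cancel₀ _ h.ne']

end StripFam

/-- The straightening map. -/
noncomputable def Bmap (Z1 Z2 : ℝ → ℝ → ℝ) (p : ℝ × ℝ) : ℝ × ℝ :=
  if p.1 + p.2 ≤ 0 then p else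
    if p.2 ≤ p.1 then (p.1, qmap Z1 p.1 p.2) else (qmap Z2 p.2 p.1, p.2)

section Bmap

variable {K1 K2 Z1 Z2 : ℝ → ℝ → ℝ}

theorem Bmap_low {p : ℝ × ℝ} (h : p.1 + p.2 ≤ 0) : Bmap Z1 Z2 p = p := by
  unfold Bmap; rw [if_pos h]

theorem Bmap_one (h1 : StripFam K1 Z1) {u w : ℝ} (h : |w| ≤ u) :
    Bmap Z1 Z2 (u, w) = (u, qmap Z1 u w) := by
  have h' := abs_le.1 h
  unfold Bmap
  by_cases h0 : u + w ≤ 0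
  · rw [if_pos h0]
    have : w = -u := by linarith
    rw [this, h1.q_bot (by linarith [abs_nonneg w])]
  · rw [if_neg h0, if_pos h'.2]

theorem Bmap_two (h1 : StripFam K1 Z1) (h2 : StripFam K2 Z2) {u w : ℝ} (h : |u| ≤ w) :
    Bmap Z1 Z2 (u, w) = (qmap Z2 w u, w) := by
  have h' := abs_le.1 h
  have hw : 0 ≤ w := (abs_nonneg u).trans h
  unfold Bmap
  by_cases h0 : u + w ≤ 0
  · rw [if_pos h0]
    have : u = -w := by linarith
    rw [this, h2.q_bot hw]
  · rw [if_neg h0]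
    by_cases h3 : w ≤ u
    · rw [if_pos h3]
      have : u = w := le_antisymm h'.2 h3
      rw [this]
      simp only
      rw [h1.q_top hw, h2.q_top hw]
    · rw [if_neg h3]

theorem Bmap_cont (h1 : StripFam K1 Z1) (h2 : StripFam K2 Z2) : Continuous (Bmap Z1 Z2) := by
  have c1 : Continuous fun p : ℝ × ℝ => (p.1, qmap Z1 p.1 p.2) :=
    continuous_fst.prodMk h1.q_cont
  have c2 : Continuous fun p : ℝ × ℝ => (qmap Z2 p.2 p.1, p.2) :=
    (h2.q_cont.comp (by fun_prop : Continuous fun p : ℝ × ℝ => (p.2, p.1))).prodMk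
      continuous_snd
  have hcl : ∀ s : Set (ℝ × ℝ), ∀ φ : ℝ × ℝ → ℝ × ℝ, Continuous φ →
      (∀ p ∈ s, Bmap Z1 Z2 p = φ p) → ContinuousOn (Bmap Z1 Z2) s := fun s φ hφ h =>
    hφ.continuousOn.congr h
  have s0 : IsClosed {p : ℝ × ℝ | p.1 + p.2 ≤ 0} :=
    isClosed_le (by fun_prop) (by fun_prop)
  have s1 : IsClosed {p : ℝ × ℝ | |p.2| ≤ p.1} :=
    isClosed_le (by fun_prop) (by fun_prop)
  have s2 : IsClosed {p : ℝ × ℝ | |p.1| ≤ p.2} :=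
    isClosed_le (by fun_prop) (by fun_prop)
  have k0 : ContinuousOn (Bmap Z1 Z2) {p : ℝ × ℝ | p.1 + p.2 ≤ 0} :=
    hcl _ _ continuous_id fun p hp => Bmap_low hp
  have k1 : ContinuousOn (Bmap Z1 Z2) {p : ℝ × ℝ | |p.2| ≤ p.1} :=
    hcl _ _ c1 fun p hp => Bmap_one (u := p.1) (w := p.2) h1 hp
  have k2 : ContinuousOn (Bmap Z1 Z2) {p : ℝ × ℝ | |p.1| ≤ p.2} :=
    hcl _ _ c2 fun p hp => Bmap_two (u := p.1) (w := p.2) h1 h2 hp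
  have k := (k0.union_of_isClosed (k1.union_of_isClosed k2 s1 s2) s0 (s1.union s2))
  have : ({p : ℝ × ℝ | p.1 + p.2 ≤ 0} ∪ ({p | |p.2| ≤ p.1} ∪ {p | |p.1| ≤ p.2})) = univ := by
    ext p
    simp only [mem_union, mem_ofPred_eq, mem_univ, iff_true, abs_le]
    by_contra! hc
    obtain ⟨a, b, c⟩ := hc
    have := b (by linarith)
    have := c (by linarith)
    linarith
  rw [this] at k
  exact continuousOn_univ.1 k

theorem quad_cases (p : ℝ × ℝ) : p.1 + p.2 ≤ 0 ∨
    (0 < p.1 + p.2 ∧ p.2 ≤ p.1 ∧ |p.2| ≤ p.1) ∨ (0 < p.1 + p.2 ∧ p.1 < p.2 ∧ |p.1| ≤ p.2) := by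
  rcases le_or_gt (p.1 + p.2) 0 with h | h
  · exact Or.inl h
  · rcases le_or_gt p.2 p.1 with h' | h'
    · exact Or.inr (Or.inl ⟨h, h', abs_le.2 ⟨by linarith, by linarith⟩⟩)
    · exact Or.inr (Or.inr ⟨h, h', abs_le.2 ⟨by linarith, by linarith⟩⟩)

theorem Bmap_inv (h1 : StripFam K1 Z1) (h2 : StripFam K2 Z2) (p : ℝ × ℝ) :
    (0 < p.1 + p.2 ∧ p.2 ≤ p.1 → 0 < (Bmap Z1 Z2 p).1 + (Bmap Z1 Z2 p).2 ∧
      (Bmap Z1 Z2 p).2 ≤ (Bmap Z1 Z2 p).1) ∧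
    (0 < p.1 + p.2 ∧ p.1 < p.2 → 0 < (Bmap Z1 Z2 p).1 + (Bmap Z1 Z2 p).2 ∧
      (Bmap Z1 Z2 p).1 < (Bmap Z1 Z2 p).2) := by
  obtain ⟨u, w⟩ := p
  constructor
  · rintro ⟨a, b⟩
    simp only at a b
    have hu : 0 ≤ u := by linarith
    have hq : |w| ≤ u := abs_le.2 ⟨by linarith, b⟩
    rw [Bmap_one h1 hq]
    have m1 := h1.q_abs u w
    rw [max_eq_left hq, abs_le] at m1
    have m2 := h1.q_mono (b := -u) (b' := w) (by rw [abs_neg, abs_of_nonneg hu]) hq (by linarith)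
    rw [h1.q_bot hu] at m2
    exact ⟨by simp only; linarith, m1.2⟩
  · rintro ⟨a, b⟩
    simp only at a b
    have hu : 0 ≤ w := by linarith
    have hq : |u| ≤ w := abs_le.2 ⟨by linarith, b.le⟩
    rw [Bmap_two h1 h2 hq]
    have m2 := h2.q_mono (b := -w) (b' := u) (by rw [abs_neg, abs_of_nonneg hu]) hq (by linarith)
    rw [h2.q_bot hu] at m2
    have m3 := h2.q_mono (b := u) (b' := w) hq (by rw [abs_of_nonneg hu]) (by linarith)
    rw [h2.q_top hu] at m3
    exact ⟨by simp only; linarith, m3⟩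

theorem Bmap_norm (h1 : StripFam K1 Z1) (h2 : StripFam K2 Z2) (p : ℝ × ℝ) :
    ‖Bmap Z1 Z2 p‖ = ‖p‖ := by
  obtain ⟨u, w⟩ := p
  rcases quad_cases (u, w) with h | ⟨-, -, h⟩ | ⟨-, -, h⟩
  · rw [Bmap_low h]
  · simp only at h
    have hu : 0 ≤ u := (abs_nonneg _).trans h
    have m1 := h1.q_abs u w
    rw [max_eq_left h] at m1
    rw [Bmap_one h1 h, Prod.norm_mk, Prod.norm_mk, Real.norm_eq_abs, Real.norm_eq_abs,
      Real.norm_eq_abs, abs_of_nonneg hu, max_eq_left h, max_eq_left m1]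
  · simp only at h
    have hu : 0 ≤ w := (abs_nonneg _).trans h
    have m1 := h2.q_abs w u
    rw [max_eq_left h] at m1
    rw [Bmap_two h1 h2 h, Prod.norm_mk, Prod.norm_mk, Real.norm_eq_abs, Real.norm_eq_abs,
      Real.norm_eq_abs, abs_of_nonneg hu, max_eq_right h, max_eq_right m1]

theorem Bmap_bij (h1 : StripFam K1 Z1) (h2 : StripFam K2 Z2) :
    Function.Bijective (Bmap Z1 Z2) := by
  constructor
  · intro p p' e
    have i := Bmap_inv h1 h2 p
    have i' := Bmap_inv h1 h2 p'
    have hp := quad_cases p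
    have hp' := quad_cases p'
    obtain ⟨u, w⟩ := p
    obtain ⟨u', w'⟩ := p'
    simp only at i i' hp hp'
    rcases hp with h | ⟨a, b, h⟩ | ⟨a, b, h⟩ <;> rcases hp' with k | ⟨c, d, k⟩ | ⟨c, d, k⟩
    · rwa [Bmap_low h, Bmap_low k] at e
    · have := (i'.1 ⟨c, d⟩).1
      rw [← e, Bmap_low h] at this
      exact absurd h (not_le.2 this)
    · have := (i'.2 ⟨c, d⟩).1
      rw [← e, Bmap_low h] at this
      exact absurd h (not_le.2 this)
    · have := (i.1 ⟨a, b⟩).1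
      rw [e, Bmap_low k] at this
      exact absurd k (not_le.2 this)
    · rw [Bmap_one h1 h, Bmap_one h1 k, Prod.mk.injEq] at e
      obtain ⟨rfl, e⟩ := e
      rw [h1.q_inj h k e]
    · have := (i.1 ⟨a, b⟩).2
      have h' := (i'.2 ⟨c, d⟩).2
      rw [e] at this
      exact absurd h' (not_lt.2 this)
    · have := (i.2 ⟨a, b⟩).1
      rw [e, Bmap_low k] at this
      exact absurd k (not_le.2 this)
    · have := (i.2 ⟨a, b⟩).2
      have h' := (i'.1 ⟨c, d⟩).2
      rw [e] at this
      exact absurd this (not_lt.2 h')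
    · rw [Bmap_two h1 h2 h, Bmap_two h1 h2 k, Prod.mk.injEq] at e
      obtain ⟨e, rfl⟩ := e
      rw [h2.q_inj h k e]
  · rintro ⟨u, w⟩
    rcases quad_cases (u, w) with h | ⟨-, -, h⟩ | ⟨-, -, h⟩
    · exact ⟨_, Bmap_low h⟩
    · obtain ⟨b, hb, e⟩ := h1.q_surj h
      exact ⟨(u, b), by rw [Bmap_one h1 hb, e]⟩
    · obtain ⟨b, hb, e⟩ := h2.q_surj h
      exact ⟨(b, w), by rw [Bmap_two h1 h2 hb, e]⟩

theorem Bmap_homeo (h1 : StripFam K1 Z1) (h2 : StripFam K2 Z2) :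
    ∃ E : (ℝ × ℝ) ≃ₜ (ℝ × ℝ), ∀ p, E p = Bmap Z1 Z2 p := by
  have hc := Bmap_cont h1 h2
  have hp : IsProperMap (Bmap Z1 Z2) := by
    rw [isProperMap_iff_isCompact_preimage]
    refine ⟨hc, fun s hs => ?_⟩
    refine Metric.isCompact_of_isClosed_isBounded (hs.isClosed.preimage hc) ?_
    obtain ⟨R, hR⟩ := hs.isBounded.exists_norm_le
    refine (Metric.isBounded_closedBall (x := (0 : ℝ × ℝ)) (r := R)).subset fun p hp => ?_
    rw [mem_closedBall_zero_iff, ← Bmap_norm h1 h2 p]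
    exact hR _ hp
  have hh : IsHomeomorph (Bmap Z1 Z2) :=
    isHomeomorph_iff_continuous_isClosedMap_bijective.2 ⟨hc, hp.isClosedMap, Bmap_bij h1 h2⟩
  exact ⟨hh.homeomorph _, fun p => rfl⟩

end Bmap

/-- Arcs of the model: continuous arcs on a branch of `min(u, w) = const`. -/
def ModelArc (q : ℝ → ℝ × ℝ) (I : Set ℝ) : Prop :=
  ContinuousOn q I ∧ ((∀ t ∈ I, q t = (0, 0)) ∨ ((∀ t ∈ I, q t ≠ (0, 0)) ∧
    (∃ b, ∀ t ∈ I, min (q t).1 (q t).2 = b) ∧ StrictMonoOn (fun t => (q t).1 - (q t).2) I))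

theorem deriv_fst {γ : ℝ → ℝ × ℝ} {v : ℝ × ℝ} {t : ℝ} (h : HasDerivAt γ v t) :
    HasDerivAt (fun s => (γ s).1) v.1 t := by
  have := h.fst
  exact this

theorem deriv_snd {γ : ℝ → ℝ × ℝ} {v : ℝ × ℝ} {t : ℝ} (h : HasDerivAt γ v t) :
    HasDerivAt (fun s => (γ s).2) v.2 t := by
  have := h.snd
  exact this

namespace SadSys

variable {lam mu : ℝ} {ε : ℝ≥0} {f g : ℝ × ℝ → ℝ} {Z Z1 Z2 : ℝ → ℝ → ℝ}

theorem rev_deriv {γ : ℝ → ℝ × ℝ} {t : ℝ} (h : HasDerivAt γ (sadF lam mu f g (γ t)) t) :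
    HasDerivAt (fun s => (γ (-s)).swap)
      (sadF mu lam (fun p => -g p.swap) (fun p => -f p.swap) (γ t).swap) (-t) := by
  have h0 : HasDerivAt γ (sadF lam mu f g (γ t)) (- -t) := by rwa [neg_neg]
  have h1 : HasDerivAt (fun s => γ (-s)) ((-1 : ℝ) • sadF lam mu f g (γ t)) (-t) :=
    h0.scomp (-t) (hasDerivAt_neg (-t))
  refine HasDerivAt.congr_deriv ((deriv_snd h1).prodMk (deriv_fst h1)) ?_
  unfold sadF
  ext
  · simp; ring
  · simp; ring

theorem rev_deriv' {γ : ℝ → ℝ × ℝ} {t : ℝ}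
    (h : HasDerivAt γ (sadF mu lam (fun p => -g p.swap) (fun p => -f p.swap) (γ t)) t) :
    HasDerivAt (fun s => (γ (-s)).swap) (sadF lam mu f g (γ t).swap) (-t) := by
  have := rev_deriv h
  simpa using this

theorem field_abs (h : SadSys lam mu ε f g) {u w : ℝ} (hw : |w| ≤ u) :
    |f (u, w)| ≤ ε * u ∧ |g (u, w)| ≤ ε * u := by
  have hu : 0 ≤ u := (abs_nonneg w).trans hw
  have hd : dist (u, w) ((0 : ℝ), (0 : ℝ)) = u := by
    rw [Prod.dist_eq, Real.dist_eq, Real.dist_eq, sub_zero, sub_zero, abs_of_nonneg hu,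
      max_eq_left hw]
  have h1 := h.lipf.dist_le_mul (u, w) (0, 0)
  have h2 := h.lipg.dist_le_mul (u, w) (0, 0)
  rw [Real.dist_eq, hd, h.f0, sub_zero] at h1
  rw [Real.dist_eq, hd, h.g0, sub_zero] at h2
  exact ⟨h1, h2⟩

/-- Forward invariance of the quadrant. -/
theorem fwd_inv (h : SadSys lam mu ε f g) {γ : ℝ → ℝ × ℝ} {t0 t1 : ℝ}
    (hγ : ∀ t ∈ Icc t0 t1, HasDerivAt γ (sadF lam mu f g (γ t)) t)
    (hs : ∀ t ∈ Icc t0 t1, 0 ≤ (γ t).1 + (γ t).2) (hn : ∀ t ∈ Icc t0 t1, γ t ≠ (0, 0))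
    (h0 : (γ t0).2 ≤ (γ t0).1) : ∀ t ∈ Icc t0 t1, (γ t).2 ≤ (γ t).1 := by
  have hd : ∀ t ∈ Icc t0 t1, HasDerivAt (fun t => (γ t).2 - (γ t).1)
      ((sadF lam mu f g (γ t)).2 - (sadF lam mu f g (γ t)).1) t := fun t ht =>
    (deriv_snd (hγ t ht)).sub (deriv_fst (hγ t ht))
  have := image_le_of_deriv_right_lt_deriv_boundary (f := fun t => (γ t).2 - (γ t).1)
    (a := t0) (b := t1) (f' := fun t => (sadF lam mu f g (γ t)).2 - (sadF lam mu f g (γ t)).1)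
    (fun t ht => (hd t ht).continuousAt.continuousWithinAt)
    (fun t ht => (hd t ⟨ht.1, ht.2.le⟩).hasDerivWithinAt) (B := fun _ => 0) (B' := fun _ => 0)
    (by linarith) (fun t => hasDerivAt_const t 0) ?_
  · intro t ht
    have := this ht
    linarith
  · intro t ht e
    have ht' : t ∈ Icc t0 t1 := ⟨ht.1, ht.2.le⟩
    have k1 := hs t ht'
    have k2 := hn t ht'
    have e : (γ t).2 - (γ t).1 = 0 := e
    change (sadF lam mu f g (γ t)).2 - (sadF lam mu f g (γ t)).1 < 0
    generalize γ t = p at k1 k2 e ⊢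
    obtain ⟨u, w⟩ := p
    simp only at k1 e
    have hwu : w = u := by linarith
    subst hwu
    have hp : 0 < w := by
      rcases (show 0 ≤ w by linarith).eq_or_lt with h | h
      · exact absurd (by rw [← h]) k2
      · exact h
    obtain ⟨a, b⟩ := h.field_abs (u := w) (w := w) (by rw [abs_of_pos hp])
    rw [abs_le] at a b
    unfold sadF
    simp only
    have h5 := mul_pos hp (sub_pos.2 h.hlam)
    have h6 := mul_pos hp (sub_pos.2 h.hmu)
    nlinarith [a.1, b.2]

/-- Positivity in the quadrant. -/
theorem quad_pos {p : ℝ × ℝ} (hs : 0 ≤ p.1 + p.2) (hn : p ≠ (0, 0)) (h : p.2 ≤ p.1) :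
    0 < p.1 ∧ |p.2| ≤ p.1 := by
  refine ⟨?_, abs_le.2 ⟨by linarith, h⟩⟩
  by_contra! hc
  apply hn
  ext
  · simp only; linarith
  · simp only; linarith

theorem arc_one (h : SadSys lam mu ε f g) (hZ : StripFam (KF lam mu f g) Z) {γ : ℝ → ℝ × ℝ}
    {t0 t1 : ℝ} (ht : t0 < t1)
    (hγ : ∀ t ∈ Icc t0 t1, HasDerivAt γ (sadF lam mu f g (γ t)) t)
    (hs : ∀ t ∈ Icc t0 t1, 0 ≤ (γ t).1 + (γ t).2) (hn : ∀ t ∈ Icc t0 t1, γ t ≠ (0, 0))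
    (h0 : (γ t0).2 ≤ (γ t0).1) :
    ∃ b, |b| ≤ (γ t0).1 ∧ (γ t0).1 < (γ t1).1 ∧ (γ t0).2 = qmap Z (γ t0).1 b ∧
      (γ t1).2 = qmap Z (γ t1).1 b := by
  have hi := h.fwd_inv hγ hs hn h0
  have hp : ∀ t ∈ Icc t0 t1, 0 < (γ t).1 ∧ |(γ t).2| ≤ (γ t).1 := fun t ht =>
    quad_pos (hs t ht) (hn t ht) (hi t ht)
  have m0 : t0 ∈ Icc t0 t1 := ⟨le_rfl, ht.le⟩
  have m1 : t1 ∈ Icc t0 t1 := ⟨ht.le, le_rfl⟩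
  obtain ⟨b, hb, e⟩ := hZ.q_surj (hp t0 m0).2
  have hinc := h.increase ht hγ (fun t ht => (hp t ht).1) (fun t ht => (hp t ht).2)
  refine ⟨b, hb, hinc, e.symm, ?_⟩
  have p0 := (hp t0 m0).1
  have p1 := (hp t1 m1).1
  rw [StripFam.q_eq hb] at e
  have := h.follow hZ ht.le hγ (fun t ht => (hp t ht).1) (fun t ht => (hp t ht).2) b
    (by rw [← e, mul_div_cancel_left₀ _ p0.ne'])
  rw [StripFam.q_eq (hb.trans hinc.le), ← this, mul_div_cancel₀ _ p1.ne']

theorem sad_lip (h : SadSys lam mu ε f g) :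
    ∃ C : ℝ≥0, LipschitzWith C (sadF lam mu f g) := by
  have hl : ∀ c : ℝ, LipschitzWith (‖c‖₊) (fun x : ℝ => c * x) := fun c =>
    LipschitzWith.of_dist_le_mul fun x y => by
      rw [Real.dist_eq, Real.dist_eq, ← mul_sub, abs_mul]; simp
  have h1 := ((hl lam).comp (LipschitzWith.prod_fst (α := ℝ) (β := ℝ))).add h.lipf
  have h2 := ((hl (-mu)).comp (LipschitzWith.prod_snd (α := ℝ) (β := ℝ))).add h.lipg
  exact ⟨_, h1.prodMk h2⟩

theorem sad_zero (h : SadSys lam mu ε f g) : sadF lam mu f g (0, 0) = (0, 0) := by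
  unfold sadF
  rw [h.f0, h.g0]; simp

/-- A solution through the origin is constant. -/
theorem zero_const (h : SadSys lam mu ε f g) {γ : ℝ → ℝ × ℝ} {I : Set ℝ} (hI : I.OrdConnected)
    (hγ : ∀ t ∈ I, HasDerivAt γ (sadF lam mu f g (γ t)) t) {a : ℝ} (ha : a ∈ I)
    (h0 : γ a = (0, 0)) : ∀ t ∈ I, γ t = (0, 0) := by
  obtain ⟨C, hC⟩ := h.sad_lip
  have key : ∀ t ∈ I, ∀ s ∈ I, t ≤ s → (γ t = (0, 0) ↔ γ s = (0, 0)) := by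
    intro t ht s hs hts
    have hsub : Icc t s ⊆ I := hI.out ht hs
    have hc : ContinuousOn γ (Icc t s) := fun r hr =>
      (hγ r (hsub hr)).continuousAt.continuousWithinAt
    constructor
    · intro h1
      have := ODE_solution_unique (v := fun _ => sadF lam mu f g) (fun _ => hC)
        (f := γ) (g := fun _ => (0, 0)) (a := t) (b := s) hc
        (fun r hr => (hγ r (hsub ⟨hr.1, hr.2.le⟩)).hasDerivWithinAt) continuousOn_const
        (fun r hr => by
          rw [h.sad_zero]; exact (hasDerivAt_const r ((0 : ℝ), (0 : ℝ))).hasDerivWithinAt) h1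
      exact this ⟨hts, le_rfl⟩
    · intro h1
      have := ODE_solution_unique_of_mem_Icc_left (v := fun _ => sadF lam mu f g)
        (s := fun _ => univ) (K := C)
        (fun _ _ => hC.lipschitzOnWith) (f := γ) (g := fun _ => (0, 0)) (a := t) (b := s) hc
        (fun r hr => (hγ r (hsub ⟨hr.1.le, hr.2⟩)).hasDerivWithinAt) (fun _ _ => mem_univ _)
        continuousOn_const
        (fun r hr => by
          rw [h.sad_zero]; exact (hasDerivAt_const r ((0 : ℝ), (0 : ℝ))).hasDerivWithinAt)
        (fun _ _ => mem_univ _) h1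
      exact this ⟨le_rfl, hts⟩
  intro t ht
  rcases le_total a t with hh | hh
  · exact (key a ha t ht hh).1 h0
  · exact (key t ht a ha hh).2 h0

/-- Two points of an orbit correspond to two points of a model arc. -/
theorem arc_pair (h : SadSys lam mu ε f g) (h1 : StripFam (KF lam mu f g) Z1)
    (h2 : StripFam (KF mu lam (fun p => -g p.swap) (fun p => -f p.swap)) Z2) {γ : ℝ → ℝ × ℝ}
    {t0 t1 : ℝ} (ht : t0 < t1)
    (hγ : ∀ t ∈ Icc t0 t1, HasDerivAt γ (sadF lam mu f g (γ t)) t)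
    (hs : ∀ t ∈ Icc t0 t1, 0 ≤ (γ t).1 + (γ t).2) (hn : ∀ t ∈ Icc t0 t1, γ t ≠ (0, 0)) :
    ∃ q0 q1 : ℝ × ℝ, γ t0 = Bmap Z1 Z2 q0 ∧ γ t1 = Bmap Z1 Z2 q1 ∧ min q0.1 q0.2 = min q1.1 q1.2 ∧
      q0.1 - q0.2 < q1.1 - q1.2 := by
  have c1 : ∀ s0 s1, t0 ≤ s0 → s0 < s1 → s1 ≤ t1 → (γ s0).2 ≤ (γ s0).1 →
      ∃ q0 q1 : ℝ × ℝ, γ s0 = Bmap Z1 Z2 q0 ∧ γ s1 = Bmap Z1 Z2 q1 ∧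
        min q0.1 q0.2 = min q1.1 q1.2 ∧ q0.1 - q0.2 < q1.1 - q1.2 := by
    intro s0 s1 a0 a1 a2 hq
    have hsub : Icc s0 s1 ⊆ Icc t0 t1 := Icc_subset_Icc a0 a2
    obtain ⟨b, hb, hi, e0, e1⟩ := h.arc_one h1 a1 (fun t ht => hγ t (hsub ht))
      (fun t ht => hs t (hsub ht)) (fun t ht => hn t (hsub ht)) hq
    refine ⟨((γ s0).1, b), ((γ s1).1, b), ?_, ?_, ?_, ?_⟩
    · rw [Bmap_one h1 hb, ← e0]
    · rw [Bmap_one h1 (hb.trans hi.le), ← e1]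
    · have := (abs_le.1 hb).2
      simp only
      rw [min_eq_right this, min_eq_right (this.trans hi.le)]
    · simp only; linarith
  have c2 : ∀ s0 s1, t0 ≤ s0 → s0 < s1 → s1 ≤ t1 → (γ s1).1 ≤ (γ s1).2 →
      ∃ q0 q1 : ℝ × ℝ, γ s0 = Bmap Z1 Z2 q0 ∧ γ s1 = Bmap Z1 Z2 q1 ∧
        min q0.1 q0.2 = min q1.1 q1.2 ∧ q0.1 - q0.2 < q1.1 - q1.2 := by
    intro s0 s1 a0 a1 a2 hq
    have hsub : ∀ t ∈ Icc (-s1) (-s0), -t ∈ Icc t0 t1 := fun t ht =>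
      ⟨by linarith [ht.2], by linarith [ht.1]⟩
    obtain ⟨b, hb, hi, e0, e1⟩ := h.swap.arc_one h2 (γ := fun s => (γ (-s)).swap)
      (t0 := -s1) (t1 := -s0) (by linarith)
      (fun t ht => by
        have := rev_deriv (hγ (-t) (hsub t ht))
        rwa [neg_neg] at this)
      (fun t ht => by
        have := hs (-t) (hsub t ht)
        simp only [Prod.fst_swap, Prod.snd_swap]
        linarith)
      (fun t ht e => hn (-t) (hsub t ht) (by
        have := congrArg Prod.swap e
        simpa using this))
      (by simpa using hq)
    simp only [neg_neg, Prod.fst_swap, Prod.snd_swap] at hb hi e0 e1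
    refine ⟨(b, (γ s0).2), (b, (γ s1).2), ?_, ?_, ?_, ?_⟩
    · rw [Bmap_two h1 h2 (hb.trans hi.le), ← e1]
    · rw [Bmap_two h1 h2 hb, ← e0]
    · have := (abs_le.1 hb).2
      simp only
      rw [min_eq_left this, min_eq_left (this.trans hi.le)]
    · simp only; linarith
  rcases le_or_gt (γ t0).2 (γ t0).1 with k0 | k0
  · exact c1 t0 t1 le_rfl ht le_rfl k0
  rcases le_or_gt (γ t1).1 (γ t1).2 with k1 | k1
  · exact c2 t0 t1 le_rfl ht le_rfl k1
  have hcont : ContinuousOn (fun t => (γ t).1 - (γ t).2) (Icc t0 t1) := fun t ht =>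
    ((deriv_fst (hγ t ht)).sub (deriv_snd (hγ t ht))).continuousAt.continuousWithinAt
  obtain ⟨s, hs1, hs2⟩ := intermediate_value_Icc ht.le hcont
    (show (0 : ℝ) ∈ _ from ⟨by linarith, by linarith⟩)
  simp only at hs2
  have n0 : t0 < s := lt_of_le_of_ne hs1.1 (by rintro rfl; linarith)
  have n1 : s < t1 := lt_of_le_of_ne hs1.2 (by rintro rfl; linarith)
  obtain ⟨q0, q, a1, a2, a3, a4⟩ := c2 t0 s le_rfl n0 hs1.2 (by linarith)
  obtain ⟨q', q1, b1, b2, b3, b4⟩ := c1 s t1 hs1.1 n1 le_rfl (by linarith)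
  have : q = q' := (Bmap_bij h1 h2).1 (a2.symm.trans b1)
  subst this
  exact ⟨q0, q1, a1, b2, a3.trans b3, a4.trans b4⟩

/-- Orbits are straightened to model arcs. -/
theorem to_model (h : SadSys lam mu ε f g) (h1 : StripFam (KF lam mu f g) Z1)
    (h2 : StripFam (KF mu lam (fun p => -g p.swap) (fun p => -f p.swap)) Z2)
    (E : (ℝ × ℝ) ≃ₜ (ℝ × ℝ)) (hE : ∀ p, E p = Bmap Z1 Z2 p) {γ : ℝ → ℝ × ℝ}
    {I : Set ℝ} (hI : I.OrdConnected)
    (hγ : ∀ t ∈ I, HasDerivAt γ (sadF lam mu f g (γ t)) t)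
    (hs : ∀ t ∈ I, 0 ≤ (γ t).1 + (γ t).2) : ModelArc (fun t => E.symm (γ t)) I := by
  have hE0 : E (0, 0) = (0, 0) := by rw [hE]; exact Bmap_low (by simp)
  have hE0' : E.symm (0, 0) = (0, 0) := by rw [← hE0, E.symm_apply_apply, hE0]
  refine ⟨fun t ht => E.symm.continuous.continuousAt.comp_continuousWithinAt
    (hγ t ht).continuousAt.continuousWithinAt, ?_⟩
  by_cases hz : ∃ a ∈ I, γ a = (0, 0)
  · obtain ⟨a, ha, e⟩ := hz
    left
    intro t ht
    change E.symm (γ t) = _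
    rw [h.zero_const hI hγ ha e t ht, hE0']
  · push Not at hz
    right
    have pair : ∀ t0 ∈ I, ∀ t1 ∈ I, t0 < t1 →
        min (E.symm (γ t0)).1 (E.symm (γ t0)).2 = min (E.symm (γ t1)).1 (E.symm (γ t1)).2 ∧
        (E.symm (γ t0)).1 - (E.symm (γ t0)).2 < (E.symm (γ t1)).1 - (E.symm (γ t1)).2 := by
      intro t0 m0 t1 m1 hlt
      have hsub := hI.out m0 m1
      obtain ⟨q0, q1, a, b, c, d⟩ := h.arc_pair h1 h2 hlt (fun t ht => hγ t (hsub ht))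
        (fun t ht => hs t (hsub ht)) (fun t ht => hz t (hsub ht))
      rw [a, b, ← hE, ← hE, E.symm_apply_apply, E.symm_apply_apply]
      exact ⟨c, d⟩
    refine ⟨fun t ht e => hz t ht ?_, ?_, fun t0 m0 t1 m1 hlt => (pair t0 m0 t1 m1 hlt).2⟩
    · rw [← hE0, ← e, E.apply_symm_apply]
    · by_cases hne : I.Nonempty
      · obtain ⟨a, ha⟩ := hne
        refine ⟨min (E.symm (γ a)).1 (E.symm (γ a)).2, fun t ht => ?_⟩
        rcases lt_trichotomy t a with hh | hh | hh
        · exact (pair t ht a ha hh).1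
        · rw [hh]
        · exact (pair a ha t ht hh).1.symm
      · exact ⟨0, fun t ht => absurd ⟨t, ht⟩ hne⟩

end SadSys

namespace SadSys

variable {lam mu : ℝ} {ε : ℝ≥0} {f g : ℝ × ℝ → ℝ} {Z1 Z2 : ℝ → ℝ → ℝ}

/-- Glueing two derivatives at `0`. -/
theorem glue_deriv {γ a b : ℝ → ℝ × ℝ} {v : ℝ × ℝ} (h : ∀ s, γ s = if 0 ≤ s then a s else b s)
    (hab : a 0 = b 0) (ha : HasDerivAt a v 0) (hb : HasDerivAt b v 0) : HasDerivAt γ v 0 := by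
  have h1 : HasDerivWithinAt γ v (Ici 0) 0 :=
    ha.hasDerivWithinAt.congr (fun s hs => by rw [h, if_pos (show 0 ≤ s from hs)]) (by rw [h, if_pos le_rfl])
  have h2 : HasDerivWithinAt γ v (Iic 0) 0 := by
    refine hb.hasDerivWithinAt.congr (fun s hs => ?_) (by rw [h, if_pos le_rfl, hab])
    rcases (show s ≤ 0 from hs).eq_or_lt with e | e
    · rw [e, h, if_pos le_rfl, hab]
    · rw [h, if_neg (not_le.2 e)]
  have := h1.union h2
  rw [Ici_union_Iic] at this
  exact this.hasDerivAt univ_mem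

/-- Model arcs are realized by orbits. -/
theorem from_model (h : SadSys lam mu ε f g) (h1 : StripFam (KF lam mu f g) Z1)
    (h2 : StripFam (KF mu lam (fun p => -g p.swap) (fun p => -f p.swap)) Z2)
    {q : ℝ → ℝ × ℝ} {I : Set ℝ} (hI : I.OrdConnected) (hq : ModelArc q I)
    (hs : ∀ t ∈ I, 0 ≤ (q t).1 + (q t).2) :
    ∃ (γ : ℝ → ℝ × ℝ) (τ : ℝ → ℝ), StrictMonoOn τ I ∧ ContinuousOn τ I ∧
      ∀ t ∈ I, Bmap Z1 Z2 (q t) = γ (τ t) ∧ HasDerivAt γ (sadF lam mu f g (γ (τ t))) (τ t) := by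
  obtain ⟨hc, hz | ⟨hn, ⟨b, hb⟩, hmono⟩⟩ := hq
  · refine ⟨fun _ => (0, 0), id, strictMono_id.strictMonoOn I, continuousOn_id, fun t ht => ?_⟩
    rw [hz t ht]
    refine ⟨Bmap_low (by simp), ?_⟩
    rw [h.sad_zero]
    exact hasDerivAt_const _ _
  have cu : ContinuousOn (fun t => (q t).1) I := continuous_fst.comp_continuousOn hc
  have cw : ContinuousOn (fun t => (q t).2) I := continuous_snd.comp_continuousOn hc
  obtain ⟨T1, Γ1, m1, k1, v1, d1⟩ := h.realize h1 b
  obtain ⟨T2, Γ2, m2, k2, v2, d2⟩ := h.swap.realize h2 b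
  have one : ∀ t ∈ I, (q t).2 ≤ (q t).1 → (q t).2 = b ∧ 0 < (q t).1 ∧ |b| ≤ (q t).1 ∧
      Bmap Z1 Z2 (q t) = Γ1 (T1 (Real.log (q t).1)) := by
    intro t ht hle
    obtain ⟨p1, p2⟩ := quad_pos (hs t ht) (hn t ht) hle
    have e := hb t ht
    rw [min_eq_right hle] at e
    refine ⟨e, p1, e ▸ p2, ?_⟩
    rw [v1, Real.exp_log p1]
    have := Bmap_one (Z2 := Z2) h1 p2
    rw [Prod.mk.eta] at this
    rw [this, StripFam.q_eq p2, e]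
  have two : ∀ t ∈ I, (q t).1 ≤ (q t).2 → (q t).1 = b ∧ 0 < (q t).2 ∧ |b| ≤ (q t).2 ∧
      Bmap Z1 Z2 (q t) = (Γ2 (T2 (Real.log (q t).2))).swap := by
    intro t ht hle
    obtain ⟨p1, p2⟩ := quad_pos (p := (q t).swap) (by have := hs t ht; simp; linarith)
      (fun e => hn t ht (by have := congrArg Prod.swap e; simpa using this)) hle
    simp only [Prod.fst_swap, Prod.snd_swap] at p1 p2
    have e := hb t ht
    rw [min_eq_left hle] at e
    refine ⟨e, p1, e ▸ p2, ?_⟩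
    rw [v2, Real.exp_log p1]
    have := Bmap_two h1 h2 p2
    rw [Prod.mk.eta] at this
    rw [this, StripFam.q_eq p2, e]
    rfl
  by_cases all1 : ∀ t ∈ I, (q t).2 ≤ (q t).1
  · refine ⟨Γ1, fun t => T1 (Real.log (q t).1), ?_, ?_, ?_⟩
    · intro t ht t' ht' hlt
      obtain ⟨e, p, -, -⟩ := one t ht (all1 t ht)
      obtain ⟨e', p', -, -⟩ := one t' ht' (all1 t' ht')
      have := hmono ht ht' hlt
      simp only at this
      exact m1 (Real.log_lt_log p (by linarith))
    · exact k1.comp_continuousOn (cu.log fun t ht => (one t ht (all1 t ht)).2.1.ne')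
    · intro t ht
      obtain ⟨e, p, a, v⟩ := one t ht (all1 t ht)
      refine ⟨v, d1 _ ?_⟩
      rwa [Real.exp_log p]
  by_cases all2 : ∀ t ∈ I, (q t).1 ≤ (q t).2
  · refine ⟨fun s => (Γ2 (-s)).swap, fun t => -T2 (Real.log (q t).2), ?_, ?_, ?_⟩
    · intro t ht t' ht' hlt
      obtain ⟨e, p, -, -⟩ := two t ht (all2 t ht)
      obtain ⟨e', p', -, -⟩ := two t' ht' (all2 t' ht')
      have := hmono ht ht' hlt
      simp only at this
      exact neg_lt_neg (m2 (Real.log_lt_log p' (by linarith)))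
    · exact (k2.comp_continuousOn (cw.log fun t ht => (two t ht (all2 t ht)).2.1.ne')).neg
    · intro t ht
      obtain ⟨e, p, a, v⟩ := two t ht (all2 t ht)
      simp only [neg_neg]
      exact ⟨v, rev_deriv' (d2 _ (by rwa [Real.exp_log p]))⟩
  push Not at all1 all2
  obtain ⟨ta, ma, ha⟩ := all1
  obtain ⟨tb, mb, hb'⟩ := all2
  have hbp : 0 < b := by
    obtain ⟨s, ms, es⟩ := hI.isPreconnected.intermediate_value ma mb
      (cu.sub cw) (show (0 : ℝ) ∈ _ from ⟨by simp only [Pi.sub_apply]; linarith, by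
        simp only [Pi.sub_apply]; linarith⟩)
    simp only [Pi.sub_apply] at es
    obtain ⟨e, p, -, -⟩ := one s ms (by linarith)
    linarith
  have hlog : Real.exp (Real.log b) = b := Real.exp_log hbp
  have hba : |b| = b := abs_of_pos hbp
  have ub : ∀ t ∈ I, b ≤ (q t).1 ∧ b ≤ (q t).2 := fun t ht =>
    ⟨by rw [← hb t ht]; exact min_le_left _ _, by rw [← hb t ht]; exact min_le_right _ _⟩
  set C1 := T1 (Real.log b) with hC1
  set C2 := T2 (Real.log b) with hC2
  set γ : ℝ → ℝ × ℝ := fun s => if 0 ≤ s then Γ1 (s + C1) else (Γ2 (-(s + -C2))).swap with hγ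
  have hab : Γ1 (0 + C1) = (Γ2 (-(0 + -C2))).swap := by
    rw [zero_add, zero_add, neg_neg, hC1, hC2, v1, v2, hlog, h1.pos b hbp, h2.pos b hbp, mul_one]
    rfl
  have dd1 : ∀ x, b ≤ Real.exp x → HasDerivAt (fun s => Γ1 (s + C1))
      (sadF lam mu f g (Γ1 (T1 x))) (T1 x - C1) := by
    intro x hx
    have := d1 x (hba.le.trans hx)
    exact HasDerivAt.comp_add_const (T1 x - C1) C1 (by rwa [sub_add_cancel])
  have dd2 : ∀ x, b ≤ Real.exp x → HasDerivAt (fun s => (Γ2 (-(s + -C2))).swap)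
      (sadF lam mu f g (Γ2 (T2 x)).swap) (C2 - T2 x) := by
    intro x hx
    have := rev_deriv' (d2 x (hba.le.trans hx))
    exact HasDerivAt.comp_add_const (f := fun s => (Γ2 (-s)).swap) (C2 - T2 x) (-C2) (by
      rwa [show C2 - T2 x + -C2 = -T2 x by ring])
  refine ⟨γ, fun t => (T1 (Real.log (q t).1) - C1) + (C2 - T2 (Real.log (q t).2)), ?_, ?_, ?_⟩
  · intro t ht t' ht' hlt
    have hm := hmono ht ht' hlt
    simp only at hm
    obtain ⟨a1, a2⟩ := ub t ht
    obtain ⟨a1', a2'⟩ := ub t' ht'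
    have A1 : ∀ x y : ℝ, b ≤ x → x ≤ y → T1 (Real.log x) ≤ T1 (Real.log y) := fun x y hx hxy =>
      m1.monotone (Real.log_le_log (by linarith) hxy)
    have A2 : ∀ x y : ℝ, b ≤ x → x ≤ y → T2 (Real.log x) ≤ T2 (Real.log y) := fun x y hx hxy =>
      m2.monotone (Real.log_le_log (by linarith) hxy)
    have S1 : ∀ x y : ℝ, b ≤ x → x < y → T1 (Real.log x) < T1 (Real.log y) := fun x y hx hxy =>
      m1 (Real.log_lt_log (by linarith) hxy)
    have S2 : ∀ x y : ℝ, b ≤ x → x < y → T2 (Real.log x) < T2 (Real.log y) := fun x y hx hxy =>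
      m2 (Real.log_lt_log (by linarith) hxy)
    rcases le_total (q t).2 (q t).1 with c | c
    · have e := (one t ht c).1
      have c' : (q t').2 ≤ (q t').1 := by linarith
      have e' := (one t' ht' c').1
      have := S1 _ _ a1 (show (q t).1 < (q t').1 by linarith)
      simp only
      rw [e, e']
      linarith
    · have e := (two t ht c).1
      rcases le_total (q t').2 (q t').1 with c' | c'
      · have e' := (one t' ht' c').1
        have B1 := A1 (q t).1 (q t').1 a1 (by linarith)
        have B2 := A2 (q t').2 (q t).2 a2' (by linarith)
        simp only
        rcases c.eq_or_lt with r | r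
        · have := S1 (q t).1 (q t').1 a1 (by linarith)
          linarith
        · have := S2 (q t').2 (q t).2 a2' (by linarith)
          linarith
      · have e' := (two t' ht' c').1
        have := S2 (q t').2 (q t).2 a2' (by linarith)
        simp only
        rw [e, e']
        linarith
  · have hp1 : ContinuousOn (fun t => T1 (Real.log (q t).1)) I :=
      k1.comp_continuousOn (cu.log fun t ht => (hbp.trans_le (ub t ht).1).ne')
    have hp2 : ContinuousOn (fun t => T2 (Real.log (q t).2)) I :=
      k2.comp_continuousOn (cw.log fun t ht => (hbp.trans_le (ub t ht).2).ne')
    exact (hp1.sub continuousOn_const).add (continuousOn_const.sub hp2)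
  · intro t ht
    obtain ⟨a1, a2⟩ := ub t ht
    have p1 : 0 < (q t).1 := hbp.trans_le a1
    have p2 : 0 < (q t).2 := hbp.trans_le a2
    rcases lt_trichotomy (q t).2 (q t).1 with c | c | c
    · obtain ⟨e, -, -, v⟩ := one t ht c.le
      have ht0 : 0 < T1 (Real.log (q t).1) - C1 :=
        sub_pos.2 (m1 (Real.log_lt_log hbp (by linarith)))
      have hD := dd1 (Real.log (q t).1) (by rwa [Real.exp_log p1])
      simp only
      rw [e, ← hC2, sub_self, add_zero]
      have ev : γ (T1 (Real.log (q t).1) - C1) = Γ1 (T1 (Real.log (q t).1)) := by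
        rw [hγ]; simp only; rw [if_pos ht0.le, sub_add_cancel]
      rw [ev]
      refine ⟨v, hD.congr_of_eventuallyEq ?_⟩
      filter_upwards [lt_mem_nhds ht0] with s hs0
      rw [hγ]; simp only; rw [if_pos hs0.le]
    · obtain ⟨e, -, -, v⟩ := one t ht c.le
      have e1 : (q t).1 = b := by linarith
      rw [e1] at v
      have ev : γ 0 = Γ1 (T1 (Real.log b)) := by
        rw [hγ]; simp only; rw [if_pos le_rfl, zero_add]
      simp only
      rw [e, e1, ← hC2, ← hC1, sub_self, sub_self, add_zero, ev]
      refine ⟨v, ?_⟩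
      have D1 := dd1 (Real.log b) hlog.ge
      have D2 := dd2 (Real.log b) hlog.ge
      rw [← hC1, sub_self] at D1
      rw [← hC2, sub_self] at D2
      have : (Γ2 C2).swap = Γ1 C1 := by simpa using hab.symm
      rw [this] at D2
      exact glue_deriv (fun s => rfl) hab D1 D2
    · obtain ⟨e, -, -, v⟩ := two t ht c.le
      have ht0 : C2 - T2 (Real.log (q t).2) < 0 :=
        sub_neg.2 (m2 (Real.log_lt_log hbp (by linarith)))
      have hD := dd2 (Real.log (q t).2) (by rwa [Real.exp_log p2])
      simp only
      rw [e, ← hC1, sub_self, zero_add]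
      have ev : γ (C2 - T2 (Real.log (q t).2)) = (Γ2 (T2 (Real.log (q t).2))).swap := by
        rw [hγ]; simp only; rw [if_neg (not_le.2 ht0)]
        congr 2
        ring
      rw [ev]
      refine ⟨v, hD.congr_of_eventuallyEq ?_⟩
      filter_upwards [gt_mem_nhds ht0] with s hs0
      rw [hγ]; simp only; rw [if_neg (not_le.2 hs0)]

/-- The straightening homeomorphism. -/
theorem exists_homeo (h : SadSys lam mu ε f g) : ∃ E : (ℝ × ℝ) ≃ₜ (ℝ × ℝ),
    (∀ p : ℝ × ℝ, p.1 + p.2 ≤ 0 → E p = p) ∧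
    (∀ p : ℝ × ℝ, 0 < p.1 + p.2 → 0 < (E p).1 + (E p).2) ∧
    (∀ (γ : ℝ → ℝ × ℝ) (I : Set ℝ), I.OrdConnected →
      (∀ t ∈ I, HasDerivAt γ (sadF lam mu f g (γ t)) t) →
      (∀ t ∈ I, 0 ≤ (γ t).1 + (γ t).2) → ModelArc (fun t => E.symm (γ t)) I) ∧
    (∀ (q : ℝ → ℝ × ℝ) (I : Set ℝ), I.OrdConnected → ModelArc q I →
      (∀ t ∈ I, 0 ≤ (q t).1 + (q t).2) →
      ∃ (γ : ℝ → ℝ × ℝ) (τ : ℝ → ℝ), StrictMonoOn τ I ∧ ContinuousOn τ I ∧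
      ∀ t ∈ I, E (q t) = γ (τ t) ∧ HasDerivAt γ (sadF lam mu f g (γ (τ t))) (τ t)) := by
  obtain ⟨Z1, h1⟩ := h.strip.exists_fam
  obtain ⟨Z2, h2⟩ := h.swap.strip.exists_fam
  obtain ⟨E, hE⟩ := Bmap_homeo h1 h2
  refine ⟨E, fun p hp => by rw [hE, Bmap_low hp], fun p hp => ?_,
    fun γ I hI hγ hs => h.to_model h1 h2 E hE hI hγ hs, fun q I hI hq hs => ?_⟩
  · rw [hE]
    rcases le_or_gt p.2 p.1 with c | c
    · exact ((Bmap_inv h1 h2 p).1 ⟨hp, c⟩).1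
    · exact ((Bmap_inv h1 h2 p).2 ⟨hp, c⟩).1
  · simp only [hE]
    exact h.from_model h1 h2 hI hq hs

end SadSys

/-- The linear isomorphism with given coefficients. -/
theorem exists_lin (a b c d : ℝ) (h : a * d - b * c ≠ 0) :
    ∃ L : (ℝ × ℝ) ≃L[ℝ] (ℝ × ℝ), ∀ u w, L (u, w) = (a * u + b * w, c * u + d * w) := by
  let e : (ℝ × ℝ) ≃ₗ[ℝ] (ℝ × ℝ) :=
    { toFun := fun p => (a * p.1 + b * p.2, c * p.1 + d * p.2)
      map_add' := fun p q => by ext <;> simp <;> ring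
      map_smul' := fun r p => by ext <;> simp <;> ring
      invFun := fun p => ((d * p.1 - b * p.2) / (a * d - b * c),
        (a * p.2 - c * p.1) / (a * d - b * c))
      left_inv := fun p => by
        ext
        · simp only; rw [div_eq_iff h]; ring
        · simp only; rw [div_eq_iff h]; ring
      right_inv := fun p => by
        ext
        · simp only
          rw [← mul_div_assoc, ← mul_div_assoc, ← add_div, div_eq_iff h]
          ring
        · simp only
          rw [← mul_div_assoc, ← mul_div_assoc, ← add_div, div_eq_iff h]
          ring }
  exact ⟨e.toContinuousLinearEquiv, fun u w => rfl⟩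

/-- A small constant. -/
theorem exists_eps (lam mu : ℝ) (hl : 0 < lam) (hm : 0 < mu) : ∃ ε : ℝ≥0, 0 < ε ∧ (ε : ℝ) < lam ∧
    (ε : ℝ) < mu ∧ (mu + ε) * ε ≤ (lam - ε) ^ 2 / 2 ∧ (lam + ε) * ε ≤ (mu - ε) ^ 2 / 2 := by
  set m := min lam mu with hmdef
  set M := max lam mu with hMdef
  have m0 : 0 < m := lt_min hl hm
  have mM : m ≤ M := (min_le_left _ _).trans (le_max_left _ _)
  have M0 : 0 < M := m0.trans_le mM
  have l1 : m ≤ lam := min_le_left _ _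
  have l2 : m ≤ mu := min_le_right _ _
  have l3 : lam ≤ M := le_max_left _ _
  have l4 : mu ≤ M := le_max_right _ _
  set e : ℝ := m ^ 2 / (16 * M) with he
  have e0 : 0 < e := by positivity
  have eM : e * M = m ^ 2 / 16 := by rw [he]; field_simp
  have em : e ≤ m / 16 := by
    rw [he, div_le_div_iff₀ (by positivity) (by norm_num)]
    nlinarith
  refine ⟨⟨e, e0.le⟩, e0, ?_, ?_, ?_, ?_⟩
  · change e < lam; linarith
  · change e < mu; linarith
  · change (mu + e) * e ≤ (lam - e) ^ 2 / 2
    have : m / 2 ≤ lam - e := by linarith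
    nlinarith [mul_le_mul_of_nonneg_right l4 e0.le, mul_le_mul_of_nonneg_right em e0.le]
  · change (lam + e) * e ≤ (mu - e) ^ 2 / 2
    have : m / 2 ≤ mu - e := by linarith
    nlinarith [mul_le_mul_of_nonneg_right l3 e0.le, mul_le_mul_of_nonneg_right em e0.le]

/-- Local form of the vector field as a globally defined saddle system. -/
theorem local_sad (X : ℝ × ℝ → ℝ × ℝ) (A : (ℝ × ℝ) →L[ℝ] (ℝ × ℝ)) (hX : HasStrictFDerivAt X A (0, 0))
    (h0 : X (0, 0) = (0, 0)) (L : (ℝ × ℝ) ≃L[ℝ] (ℝ × ℝ)) (lam mu : ℝ) (hl : 0 < lam) (hm : 0 < mu)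
    (hA : ∀ u w, A (L (u, w)) = L (lam * u, -mu * w)) :
    ∃ (ε : ℝ≥0) (f g : ℝ × ℝ → ℝ) (N : Set (ℝ × ℝ)), N ∈ 𝓝 ((0, 0) : ℝ × ℝ) ∧
      SadSys lam mu ε f g ∧ ∀ p ∈ N, X p = L (sadF lam mu f g (L.symm p)) := by
  obtain ⟨ε, e0, e1, e2, e3, e4⟩ := exists_eps lam mu hl hm
  have hL0 : L (0, 0) = (0, 0) := L.map_zero
  obtain ⟨D0, hD0⟩ := exists_lin lam 0 0 (-mu) (by
    have := mul_pos hl hm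
    simp
    exact ⟨hl.ne', hm.ne'⟩)
  set D : (ℝ × ℝ) →L[ℝ] (ℝ × ℝ) := (D0 : (ℝ × ℝ) →L[ℝ] (ℝ × ℝ)) with hDdef
  have hD : ∀ u w, D (u, w) = (lam * u, -mu * w) := fun u w => by
    rw [hDdef, ContinuousLinearEquiv.coe_coe, hD0]; simp
  have hDp : ∀ p : ℝ × ℝ, D p = (lam * p.1, -mu * p.2) := fun p => hD p.1 p.2
  set F : ℝ × ℝ → ℝ × ℝ := fun p => L.symm (X (L p)) - D p with hF
  have hF' : HasStrictFDerivAt F (0 : (ℝ × ℝ) →L[ℝ] (ℝ × ℝ)) (0, 0) := by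
    have s1 : HasStrictFDerivAt (fun p => X (L p)) (A.comp (L : (ℝ × ℝ) →L[ℝ] (ℝ × ℝ))) (0, 0) :=
      HasStrictFDerivAt.comp (0, 0) (by rw [hL0]; exact hX) L.hasStrictFDerivAt
    have s2 : HasStrictFDerivAt (fun p => L.symm (X (L p)))
        ((L.symm : (ℝ × ℝ) →L[ℝ] (ℝ × ℝ)).comp (A.comp (L : (ℝ × ℝ) →L[ℝ] (ℝ × ℝ)))) (0, 0) :=
      HasStrictFDerivAt.comp (0, 0) L.symm.hasStrictFDerivAt s1
    have s3 := s2.sub D.hasStrictFDerivAt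
    have : (L.symm : (ℝ × ℝ) →L[ℝ] (ℝ × ℝ)).comp (A.comp (L : (ℝ × ℝ) →L[ℝ] (ℝ × ℝ))) - D = 0 := by
      ext1
      · ext1
        simp [hA, hD]
      · ext1
        simp [hA, hD]
    rw [this] at s3
    exact s3
  obtain ⟨s, hs, hlip⟩ := hF'.exists_lipschitzOnWith_of_nnnorm_lt ε (by simpa using e0)
  have hF0 : F (0, 0) = (0, 0) := by
    simp only [hF, hL0, h0]
    rw [show L.symm (0, 0) = (0, 0) from L.symm.map_zero, show D (0, 0) = (0, 0) from D.map_zero]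
    exact sub_self _
  have hm0 : ((0, 0) : ℝ × ℝ) ∈ s := mem_of_mem_nhds hs
  have lf : LipschitzOnWith ε (fun p => (F p).1) s := by
    have := (LipschitzWith.prod_fst (α := ℝ) (β := ℝ)).comp_lipschitzOnWith hlip
    rwa [one_mul] at this
  have lg : LipschitzOnWith ε (fun p => (F p).2) s := by
    have := (LipschitzWith.prod_snd (α := ℝ) (β := ℝ)).comp_lipschitzOnWith hlip
    rwa [one_mul] at this
  obtain ⟨f, hf, ef⟩ := lf.extend_real
  obtain ⟨g, hg, eg⟩ := lg.extend_real
  refine ⟨ε, f, g, L.symm ⁻¹' s, ?_, ⟨hf, hg, ?_, ?_, e1, e2, e3, e4⟩, ?_⟩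
  · apply L.symm.continuous.continuousAt.preimage_mem_nhds
    rwa [show L.symm (0, 0) = (0, 0) from L.symm.map_zero]
  · rw [← ef hm0]; simp [hF0]
  · rw [← eg hm0]; simp [hF0]
  · intro p hp
    have k1 := ef hp
    have k2 := eg hp
    simp only [hF, L.apply_symm_apply] at k1 k2
    unfold sadF
    rw [← k1, ← k2]
    apply L.symm.injective
    rw [L.symm_apply_apply]
    ext
    · simp [hDp]
    · simp [hDp]

/-- Straightening data for the upper half plane. -/
structure Straightens (X : ℝ × ℝ → ℝ × ℝ) (Φ : (ℝ × ℝ) ≃ₜ (ℝ × ℝ)) (σ : ℝ)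
    (N : Set (ℝ × ℝ)) : Prop where
  nhd : N ∈ 𝓝 ((0, 0) : ℝ × ℝ)
  sgn : ∀ p : ℝ × ℝ, 0 ≤ p.2 ↔ 0 ≤ (Φ p).1 + (Φ p).2
  line : ∀ x : ℝ, Φ (x, 0) = (σ * x / 2, -(σ * x / 2))
  fwd : ∀ (γ : ℝ → ℝ × ℝ) (I : Set ℝ), I.OrdConnected →
    (∀ t ∈ I, HasDerivAt γ (X (γ t)) t) → (∀ t ∈ I, γ t ∈ N) → (∀ t ∈ I, 0 ≤ (γ t).2) →
    ModelArc (fun t => Φ (γ t)) I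
  bwd : ∀ (q : ℝ → ℝ × ℝ) (I : Set ℝ), I.OrdConnected → ModelArc q I →
    (∀ t ∈ I, 0 ≤ (q t).1 + (q t).2) → (∀ t ∈ I, Φ.symm (q t) ∈ N) →
    ∃ (γ : ℝ → ℝ × ℝ) (τ : ℝ → ℝ), StrictMonoOn τ I ∧ ContinuousOn τ I ∧
      ∀ t ∈ I, Φ.symm (q t) = γ (τ t) ∧ HasDerivAt γ (X (γ (τ t))) (τ t)

theorem exists_straightens (X : ℝ × ℝ → ℝ × ℝ) (A : (ℝ × ℝ) →L[ℝ] (ℝ × ℝ))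
    (hX : HasStrictFDerivAt X A (0, 0)) (h0 : X (0, 0) = (0, 0)) (a b c d σ : ℝ)
    (ha : A (1, 0) = (a, c)) (hb : A (0, 1) = (b, d)) (hdet : a * d - b * c < 0)
    (hσ : σ = 1 ∨ σ = -1) (hc : 0 < σ * c) :
    ∃ Φ N, Straightens X Φ σ N := by
  have hσ2 : σ * σ = 1 := by rcases hσ with h | h <;> rw [h] <;> norm_num
  have hc0 : c ≠ 0 := by rintro rfl; simp at hc
  set R := Real.sqrt ((a + d) ^ 2 - 4 * (a * d - b * c)) with hR
  have hRpos : 0 < (a + d) ^ 2 - 4 * (a * d - b * c) := by nlinarith [sq_nonneg (a + d)]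
  have R0 : 0 < R := Real.sqrt_pos.2 hRpos
  have R2 : R ^ 2 = (a + d) ^ 2 - 4 * (a * d - b * c) := Real.sq_sqrt hRpos.le
  have hRa : |a + d| < R := by
    apply abs_lt_of_sq_lt_sq _ R0.le
    linarith
  rw [abs_lt] at hRa
  set lam := (a + d + R) / 2 with hlam
  set mu := (R - (a + d)) / 2 with hmu
  have l0 : 0 < lam := by rw [hlam]; linarith [hRa.1]
  have m0 : 0 < mu := by rw [hmu]; linarith [hRa.2]
  have root1 : lam ^ 2 - (a + d) * lam + (a * d - b * c) = 0 := by
    rw [hlam]; linear_combination R2 / 4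
  have root2 : mu ^ 2 + (a + d) * mu + (a * d - b * c) = 0 := by
    rw [hmu]; linear_combination R2 / 4
  have hsum : lam + mu = R := by rw [hlam, hmu]; ring
  set κ := 2 * (σ * c) / R with hκ
  have κ0 : 0 < κ := by positivity
  obtain ⟨L, hL⟩ := exists_lin (κ * ((lam - d) / c)) (κ * ((-mu - d) / c)) κ κ (by
    have : κ * ((lam - d) / c) * κ - κ * ((-mu - d) / c) * κ = κ ^ 2 * R / c := by
      rw [← hsum]; field_simp; ring
    rw [this]
    positivity)
  have hAxy : ∀ x y : ℝ, A (x, y) = (a * x + b * y, c * x + d * y) := by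
    intro x y
    have : ((x, y) : ℝ × ℝ) = x • (1, 0) + y • (0, 1) := by ext <;> simp
    rw [this, map_add, map_smul, map_smul, ha, hb]
    ext <;> simp <;> ring
  obtain ⟨ε, f, g, N, hN, hS, hXN⟩ := local_sad X A hX h0 L lam mu l0 m0 (by
    intro u w
    rw [hL, hL, hAxy]
    ext
    · simp only
      field_simp
      linear_combination (-u) * root1 - w * root2
    · simp only
      field_simp
      ring)
  obtain ⟨E, E1, E2, E3, E4⟩ := hS.exists_homeo
  have hsgnE : ∀ p : ℝ × ℝ, 0 ≤ p.1 + p.2 ↔ 0 ≤ (E p).1 + (E p).2 := by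
    intro p
    constructor
    · intro h
      rcases h.eq_or_lt with e | e
      · rw [E1 p e.symm.le]; exact h
      · exact (E2 p e).le
    · intro h
      by_contra! hlt
      rw [E1 p hlt.le] at h
      linarith
  have hL2 : ∀ p : ℝ × ℝ, (L p).2 = κ * (p.1 + p.2) := by
    rintro ⟨u, w⟩; rw [hL]; ring
  have hsgnL : ∀ p : ℝ × ℝ, 0 ≤ p.2 ↔ 0 ≤ (L.symm p).1 + (L.symm p).2 := by
    intro p
    have := hL2 (L.symm p)
    rw [L.apply_symm_apply] at this
    rw [this]
    exact mul_nonneg_iff_of_pos_left κ0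
  refine ⟨L.symm.toHomeomorph.trans E.symm, N, hN, ?_, ?_, ?_, ?_⟩
  · intro p
    rw [hsgnL p]
    change _ ↔ 0 ≤ (E.symm (L.symm p)).1 + (E.symm (L.symm p)).2
    rw [hsgnE (E.symm (L.symm p)), E.apply_symm_apply]
  · intro x
    change E.symm (L.symm (x, 0)) = _
    have e1 : L.symm (x, 0) = (σ * x / 2, -(σ * x / 2)) := by
      rw [L.symm_apply_eq, hL]
      ext
      · simp only
        rw [hκ, ← hsum]
        field_simp
        linear_combination (-x * R) * hσ2
      · simp only; ring
    rw [e1, E.symm_apply_eq, E1 _ (by simp)]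
  · intro γ I hI hγ hN' hy
    refine E3 (fun t => L.symm (γ t)) I hI (fun t ht => ?_) (fun t ht => (hsgnL _).1 (hy t ht))
    have := (L.symm : (ℝ × ℝ) →L[ℝ] (ℝ × ℝ)).hasFDerivAt.comp_hasDerivAt t (hγ t ht)
    rw [hXN _ (hN' t ht)] at this
    refine HasDerivAt.congr_deriv this ?_
    exact L.symm_apply_apply _
  · intro q I hI hq hs hN'
    obtain ⟨γ, τ, t1, t2, t3⟩ := E4 q I hI hq hs
    refine ⟨fun s => L (γ s), τ, t1, t2, fun t ht => ?_⟩
    obtain ⟨k1, k2⟩ := t3 t ht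
    have e : (L.symm.toHomeomorph.trans E.symm).symm (q t) = L (E (q t)) := rfl
    have hn := hN' t ht
    rw [e, k1] at hn
    refine ⟨by rw [e, k1], ?_⟩
    have := (L : (ℝ × ℝ) →L[ℝ] (ℝ × ℝ)).hasFDerivAt.comp_hasDerivAt (τ t) k2
    refine HasDerivAt.congr_deriv this ?_
    rw [hXN _ hn, L.symm_apply_apply]
    rfl

theorem maps_upper {X X' : ℝ × ℝ → ℝ × ℝ} {Φ Φ' : (ℝ × ℝ) ≃ₜ (ℝ × ℝ)} {σ σ' : ℝ}
    {N N' : Set (ℝ × ℝ)} (h : Straightens X Φ σ N) (h' : Straightens X' Φ' σ' N')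
    {H : ℝ × ℝ → ℝ × ℝ} {S S' : Set (ℝ × ℝ)} (h1 : ∀ p ∈ S, p ∈ N) (h2 : ∀ p ∈ S, 0 ≤ p.2)
    (h3 : ∀ p ∈ S, H p = Φ'.symm (Φ p)) (h4 : ∀ p ∈ S, H p ∈ N') (h5 : ∀ p ∈ S, H p ∈ S') :
    MapsOrbits X X' H S S' := by
  intro γ I hI hγ hS
  have hm := h.fwd γ I hI hγ (fun t ht => h1 _ (hS t ht)) (fun t ht => h2 _ (hS t ht))
  obtain ⟨δ, τ, m, c, k⟩ := h'.bwd _ I hI hm (fun t ht => (h.sgn _).1 (h2 _ (hS t ht)))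
    (fun t ht => by
      have := h4 _ (hS t ht)
      rwa [h3 _ (hS t ht)] at this)
  refine ⟨δ, τ '' I, τ, (hI.isPreconnected.image τ c).ordConnected, ?_, ?_, ?_, m, c, ?_⟩
  · rintro _ ⟨t, ht, rfl⟩
    exact (k t ht).2
  · rintro _ ⟨t, ht, rfl⟩
    rw [← (k t ht).1, ← h3 _ (hS t ht)]
    exact h5 _ (hS t ht)
  · exact ⟨mapsTo_image _ _, m.injOn, surjOn_image _ _⟩
  · intro t ht
    rw [h3 _ (hS t ht), (k t ht).1]

theorem maps_neg {Y Y' : ℝ × ℝ → ℝ × ℝ} {H : ℝ × ℝ → ℝ × ℝ} {S S' : Set (ℝ × ℝ)}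
    (h : MapsOrbits (fun p => -Y (-p)) (fun p => -Y' (-p)) (fun p => -H (-p))
      {p | -p ∈ S} {p | -p ∈ S'}) : MapsOrbits Y Y' H S S' := by
  intro γ I hI hγ hS
  obtain ⟨δ, J, τ, a1, a2, a3, a4, a5, a6, a7⟩ := h (fun t => -γ t) I hI
    (fun t ht => by
      simp only [neg_neg]
      exact (hγ t ht).neg)
    (fun t ht => by
      change - -γ t ∈ S
      rw [neg_neg]; exact hS t ht)
  refine ⟨fun s => -δ s, J, τ, a1, ?_, a3, a4, a5, a6, ?_⟩
  · intro s hs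
    have := (a2 s hs).neg
    rwa [neg_neg] at this
  · intro t ht
    have := a7 t ht
    simp only [neg_neg] at this
    change H (γ t) = -δ (τ t)
    rw [← this, neg_neg]

/-- Homeomorphisms preserving the upper half plane with prescribed values on the line. -/
structure HalfMap (σ : ℝ) (G : (ℝ × ℝ) ≃ₜ (ℝ × ℝ)) : Prop where
  nonneg : ∀ p : ℝ × ℝ, 0 ≤ p.2 ↔ 0 ≤ (G p).2
  line : ∀ x : ℝ, G (x, 0) = (σ * x, 0)
  line' : ∀ x : ℝ, G.symm (x, 0) = (σ * x, 0)

theorem HalfMap.symm {σ : ℝ} {G : (ℝ × ℝ) ≃ₜ (ℝ × ℝ)} (h : HalfMap σ G) : HalfMap σ G.symm where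
  nonneg p := by rw [h.nonneg (G.symm p), G.apply_symm_apply]
  line := h.line'
  line' := h.line

theorem HalfMap.pos {σ : ℝ} {G : (ℝ × ℝ) ≃ₜ (ℝ × ℝ)} (h : HalfMap σ G) {p : ℝ × ℝ}
    (hp : 0 < p.2) : 0 < (G p).2 := by
  rcases ((h.nonneg p).1 hp.le).eq_or_lt with e | e
  · have h1 : G p = ((G p).1, 0) := Prod.ext rfl e.symm
    have h2 : p = G.symm (G p) := (G.symm_apply_apply p).symm
    rw [h1, h.line'] at h2
    rw [h2] at hp
    simp at hp
  · exact e

/-- Glueing two half maps. -/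
noncomputable def glueMap (G1 G2 : (ℝ × ℝ) ≃ₜ (ℝ × ℝ)) (p : ℝ × ℝ) : ℝ × ℝ :=
  if 0 ≤ p.2 then G1 p else -G2 (-p)

section glue
variable {σ : ℝ} {G1 G2 : (ℝ × ℝ) ≃ₜ (ℝ × ℝ)}

theorem glue_up {p : ℝ × ℝ} (hp : 0 ≤ p.2) : glueMap G1 G2 p = G1 p := by
  unfold glueMap; rw [if_pos hp]

theorem glue_down (h1 : HalfMap σ G1) (h2 : HalfMap σ G2) {p : ℝ × ℝ} (hp : p.2 ≤ 0) :
    glueMap G1 G2 p = -G2 (-p) := by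
  unfold glueMap
  split_ifs with h
  · obtain ⟨x, y⟩ := p
    have : y = 0 := le_antisymm hp h
    subst this
    rw [h1.line, show -((x, 0) : ℝ × ℝ) = (-x, 0) by simp, h2.line]
    simp
  · rfl

theorem glue_cont (h1 : HalfMap σ G1) (h2 : HalfMap σ G2) : Continuous (glueMap G1 G2) := by
  unfold glueMap
  refine Continuous.if_le G1.continuous (by fun_prop) continuous_const continuous_snd ?_
  intro p hp
  rw [← glue_up (G2 := G2) hp.le, glue_down h1 h2 hp.ge]

theorem glue_inv (h1 : HalfMap σ G1) (h2 : HalfMap σ G2) (p : ℝ × ℝ) :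
    glueMap G1.symm G2.symm (glueMap G1 G2 p) = p := by
  rcases le_or_gt 0 p.2 with h | h
  · rw [glue_up h, glue_up ((h1.nonneg p).1 h), G1.symm_apply_apply]
  · have h' : 0 < (-p).2 := by simpa using h
    have := h2.pos h'
    rw [glue_down h1 h2 h.le, glue_down h1.symm h2.symm (by simpa using this.le), neg_neg,
      G2.symm_apply_apply, neg_neg]

theorem glue_sgn (h1 : HalfMap σ G1) (h2 : HalfMap σ G2) (p : ℝ × ℝ) :
    (0 ≤ p.2 → 0 ≤ (glueMap G1 G2 p).2) ∧ (p.2 ≤ 0 → (glueMap G1 G2 p).2 ≤ 0) ∧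
      (p.2 = 0 → (glueMap G1 G2 p).2 = 0) := by
  have a : 0 ≤ p.2 → 0 ≤ (glueMap G1 G2 p).2 := fun h => by
    rw [glue_up h]; exact (h1.nonneg p).1 h
  have b : p.2 ≤ 0 → (glueMap G1 G2 p).2 ≤ 0 := fun h => by
    rw [glue_down h1 h2 h]
    have := (h2.nonneg (-p)).1 (by simpa using h)
    simpa using this
  exact ⟨a, b, fun h => le_antisymm (b h.le) (a h.ge)⟩

end glue

theorem Straightens.half {X X' : ℝ × ℝ → ℝ × ℝ} {Φ Φ' : (ℝ × ℝ) ≃ₜ (ℝ × ℝ)} {σ : ℝ}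
    {N N' : Set (ℝ × ℝ)} (hσ : σ = 1 ∨ σ = -1) (h : Straightens X Φ σ N)
    (h' : Straightens X' Φ' 1 N') : HalfMap σ (Φ.trans Φ'.symm) where
  nonneg p := by
    change _ ↔ 0 ≤ (Φ'.symm (Φ p)).2
    rw [h.sgn, h'.sgn, Φ'.apply_symm_apply]
  line x := by
    change Φ'.symm (Φ (x, 0)) = _
    rw [Φ'.symm_apply_eq, h.line, h'.line, one_mul]
  line' x := by
    change Φ.symm (Φ' (x, 0)) = _
    rw [Φ.symm_apply_eq, h.line, h'.line]
    rcases hσ with e | e <;> rw [e] <;> simp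

theorem det_neg_of_eig {X : ℝ × ℝ → ℝ × ℝ} (h1 : (eig1 X).im = 0)
    (h : (eig1 X).re * (eig2 X).re < 0) : detJ X < 0 := by
  unfold eig1 at h1 h
  unfold eig2 at h
  split_ifs at h1 h with hc
  · simp only [Complex.ofReal_re] at h
    have := Real.sq_sqrt hc
    nlinarith
  · simp at h
    exfalso
    nlinarith [mul_self_nonneg (trJ X)]

theorem jac_data {U : Set (ℝ × ℝ)} {X : ℝ × ℝ → ℝ × ℝ} (hU : IsOpen U) (h0 : (0, 0) ∈ U)
    (hX : ContDiffOn ℝ 1 X U) : HasStrictFDerivAt X (fderiv ℝ X (0, 0)) (0, 0) :=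
  (hX.contDiffAt (hU.mem_nhds h0)).hasStrictFDerivAt (by norm_num)

theorem main_assembly {X Y : ℝ × ℝ → ℝ × ℝ} {A B : (ℝ × ℝ) →L[ℝ] (ℝ × ℝ)}
    (hX : HasStrictFDerivAt X A (0, 0)) (hY : HasStrictFDerivAt Y B (0, 0))
    (hX0 : X (0, 0) = (0, 0)) (hY0 : Y (0, 0) = (0, 0))
    (hdX : (A (1, 0)).1 * (A (0, 1)).2 - (A (0, 1)).1 * (A (1, 0)).2 < 0)
    (hdY : (B (1, 0)).1 * (B (0, 1)).2 - (B (0, 1)).1 * (B (1, 0)).2 < 0)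
    (hc : (A (1, 0)).2 * (B (1, 0)).2 > 0) :
    LocalSigmaEquiv X Y (fun p : ℝ × ℝ => (p.2, p.1)) (fun p : ℝ × ℝ => (p.2, p.1)) := by
  obtain ⟨σ, hσ, s1, s2⟩ : ∃ σ : ℝ, (σ = 1 ∨ σ = -1) ∧ 0 < σ * (A (1, 0)).2 ∧
      0 < σ * (B (1, 0)).2 := by
    rcases pos_and_pos_or_neg_and_neg_of_mul_pos hc with h | h
    · exact ⟨1, Or.inl rfl, by linarith [h.1], by linarith [h.2]⟩
    · exact ⟨-1, Or.inr rfl, by linarith [h.1], by linarith [h.2]⟩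
  have hYr : HasStrictFDerivAt (fun p => -Y (-p)) B (0, 0) := by
    have hn : HasStrictFDerivAt (fun p : ℝ × ℝ => -p)
        (-(ContinuousLinearMap.id ℝ (ℝ × ℝ))) (0, 0) := (hasStrictFDerivAt_id _).neg
    have h1 : HasStrictFDerivAt (fun p => Y (-p))
        (B.comp (-(ContinuousLinearMap.id ℝ (ℝ × ℝ)))) (0, 0) :=
      HasStrictFDerivAt.comp (0, 0) (by simpa using hY) hn
    have h2 := h1.neg
    have : -(B.comp (-(ContinuousLinearMap.id ℝ (ℝ × ℝ)))) = B := by ext1 <;> ext1 <;> simp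
    rw [this] at h2
    exact h2
  have hS : HasStrictFDerivAt (fun p : ℝ × ℝ => (p.2, p.1))
      ((ContinuousLinearMap.snd ℝ ℝ ℝ).prod (ContinuousLinearMap.fst ℝ ℝ ℝ)) (0, 0) :=
    hasStrictFDerivAt_snd.prodMk hasStrictFDerivAt_fst
  obtain ⟨ΦX, NX, sX⟩ := exists_straightens X A hX hX0 _ _ _ _ σ rfl rfl hdX hσ s1
  obtain ⟨ΦY, NY, sY⟩ := exists_straightens _ B hYr (by simp [hY0]) _ _ _ _ σ rfl rfl hdY hσ s2
  obtain ⟨ΦS, NS, sS⟩ := exists_straightens _ _ hS rfl 0 1 1 0 1 (by simp) (by simp)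
    (by norm_num) (Or.inl rfl) (by norm_num)
  have sS' : Straightens (fun p : ℝ × ℝ => -(fun p : ℝ × ℝ => (p.2, p.1)) (-p)) ΦS 1 NS := by
    have : (fun p : ℝ × ℝ => -(fun p : ℝ × ℝ => (p.2, p.1)) (-p)) =
        fun p : ℝ × ℝ => (p.2, p.1) := by
      funext p; ext <;> simp
    rw [this]; exact sS
  have gX := sX.half hσ sS
  have gY := sY.half hσ sS
  set G1 := ΦX.trans ΦS.symm with hG1
  set G2 := ΦY.trans ΦS.symm with hG2
  set H := glueMap G1 G2 with hH
  set Hi := glueMap G1.symm G2.symm with hHi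
  have HiH : ∀ p, Hi (H p) = p := glue_inv gX gY
  have HHi : ∀ p, H (Hi p) = p := glue_inv gX.symm gY.symm
  have cH : Continuous H := glue_cont gX gY
  have cHi : Continuous Hi := glue_cont gX.symm gY.symm
  have H0 : H (0, 0) = (0, 0) := by
    rw [hH, glue_up le_rfl, gX.line]; simp
  have Hi0 : Hi (0, 0) = (0, 0) := by rw [← H0, HiH]; exact H0.symm
  have neg0 : -((0, 0) : ℝ × ℝ) = (0, 0) := by simp
  have cneg : ContinuousAt (fun p : ℝ × ℝ => -p) (0, 0) := continuous_neg.continuousAt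
  have nY : {p : ℝ × ℝ | -p ∈ NY} ∈ 𝓝 ((0, 0) : ℝ × ℝ) :=
    cneg.preimage_mem_nhds (by rw [neg0]; exact sY.nhd)
  have nS : {p : ℝ × ℝ | -p ∈ NS} ∈ 𝓝 ((0, 0) : ℝ × ℝ) :=
    cneg.preimage_mem_nhds (by rw [neg0]; exact sS.nhd)
  have nHS : H ⁻¹' (NS ∩ {p | -p ∈ NS}) ∈ 𝓝 ((0, 0) : ℝ × ℝ) :=
    cH.continuousAt.preimage_mem_nhds (by rw [H0]; exact inter_mem sS.nhd nS)
  set U₀ : Set (ℝ × ℝ) := (NX ∩ {p | -p ∈ NY}) ∩ H ⁻¹' (NS ∩ {p | -p ∈ NS}) with hU₀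
  have nU : U₀ ∈ 𝓝 ((0, 0) : ℝ × ℝ) := inter_mem (inter_mem sX.nhd nY) nHS
  have hV : ∀ q, q ∈ Hi ⁻¹' U₀ → Hi q ∈ NX ∧ -Hi q ∈ NY ∧ q ∈ NS ∧ -q ∈ NS := by
    intro q hq
    obtain ⟨⟨a, b⟩, c⟩ := hq
    change H (Hi q) ∈ NS ∩ {p : ℝ × ℝ | -p ∈ NS} at c
    rw [HHi] at c
    exact ⟨a, b, c.1, c.2⟩
  have mV : ∀ p ∈ U₀, H p ∈ Hi ⁻¹' U₀ := fun p hp => by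
    change Hi (H p) ∈ U₀
    rwa [HiH]
  refine ⟨U₀, Hi ⁻¹' U₀, H, Hi, nU, cHi.continuousAt.preimage_mem_nhds (by rw [Hi0]; exact nU),
    cH.continuousOn, cHi.continuousOn, ⟨mV, fun p _ q _ e => ?_, fun q hq => ⟨Hi q, hq, HHi q⟩⟩,
    fun p _ => HiH p, fun q _ => HHi q, H0, ?_, ?_, ?_, ?_, ?_⟩
  · rw [← HiH p, e, HiH]
  · ext q
    constructor
    · rintro ⟨p, ⟨hp, hp0⟩, rfl⟩
      exact ⟨mV p hp, (glue_sgn gX gY p).2.2 hp0⟩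
    · rintro ⟨hq, hq0⟩
      exact ⟨Hi q, ⟨hq, (glue_sgn gX.symm gY.symm q).2.2 hq0⟩, HHi q⟩
  · refine maps_upper sX sS (fun p hp => hp.1.1.1) (fun p hp => hp.2) (fun p hp => ?_)
      (fun p hp => hp.1.2.1) (fun p hp => ⟨mV p hp.1, (glue_sgn gX gY p).1 hp.2⟩)
    rw [hH, glue_up hp.2]
    rfl
  · refine maps_neg (maps_upper sY sS' (fun p hp => ?_) (fun p hp => ?_) (fun p hp => ?_)
      (fun p hp => hp.1.2.2) (fun p hp => ?_))
    · have := hp.1.1.2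
      change - -p ∈ NY at this
      rwa [neg_neg] at this
    · have := hp.2
      change (-p).2 ≤ 0 at this
      simpa using this
    · rw [hH, glue_down gX gY hp.2, neg_neg, neg_neg]
      rfl
    · change - -H (-p) ∈ Hi ⁻¹' U₀ ∩ {p : ℝ × ℝ | p.2 ≤ 0}
      rw [neg_neg]
      exact ⟨mV _ hp.1, (glue_sgn gX gY (-p)).2.1 hp.2⟩
  · refine maps_upper sS sX (fun p hp => (hV p hp.1).2.2.1) (fun p hp => hp.2) (fun p hp => ?_)
      (fun p hp => (hV p hp.1).1)
      (fun p hp => ⟨hp.1, (glue_sgn gX.symm gY.symm p).1 hp.2⟩)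
    rw [hHi, glue_up hp.2]
    rfl
  · refine maps_neg (maps_upper sS' sY (fun p hp => ?_) (fun p hp => ?_) (fun p hp => ?_)
      (fun p hp => (hV _ hp.1).2.1) (fun p hp => ?_))
    · have := (hV _ hp.1).2.2.2
      rwa [neg_neg] at this
    · have := hp.2
      change (-p).2 ≤ 0 at this
      simpa using this
    · rw [hHi, glue_down gX.symm gY.symm hp.2, neg_neg, neg_neg]
      rfl
    · change - -Hi (-p) ∈ U₀ ∩ {p : ℝ × ℝ | p.2 ≤ 0}
      rw [neg_neg]
      exact ⟨hp.1, (glue_sgn gX.symm gY.symm (-p)).2.1 hp.2⟩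

end

/-- Saddle-saddle case: `Z ∈ Ω₁` with all eigenvalues real and both products negative is
locally Σ-equivalent near the origin to `Z_ss = ((y, x), (y, x))`. -/
theorem stmt6 (U : Set (ℝ × ℝ)) (X Y : ℝ × ℝ → ℝ × ℝ)
    (hZ : InOmega1 U X Y)
    (hreal : (eig1 X).im = 0 ∧ (eig2 X).im = 0 ∧ (eig1 Y).im = 0 ∧ (eig2 Y).im = 0)
    (hX : (eig1 X).re * (eig2 X).re < 0) (hY : (eig1 Y).re * (eig2 Y).re < 0) :
    LocalSigmaEquiv X Y
      (fun p : ℝ × ℝ => (p.2, p.1))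
      (fun p : ℝ × ℝ => (p.2, p.1)) := by
  obtain ⟨⟨hU, h0, cX, cY, zX, zY, -, hc⟩, -⟩ := hZ
  exact main_assembly (jac_data hU h0 cX) (jac_data hU h0 cY) zX zY
    (det_neg_of_eig hreal.1 hX) (det_neg_of_eig hreal.2.2.1 hY) hc
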